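/- arXiv:2203.00405 — 3 statements merged into one kernel-verified Lean document; each statement's English description precedes it below -/
import Mathlib

section
/- Let (W,S) be a Coxeter system and k ∈ ℕ. Then the poset (W, ≤_{L^k}) is graded with rank function ℓ: for all u ≤_{L^k} v, every maximal chain of the interval [u,v] in (W, ≤_{L^k}) has length ℓ(v) − ℓ(u). In particular, if u <_{L^k} v there exists a chain u = x_0, x_1, …, x_n = v with n = ℓ(v) − ℓ(u), x_i x_{i-1}⁻¹ ∈ T_k and ℓ(x_i) = ℓ(x_{i-1}) + 1 for all i. -/
/-!
Formalization of definitions from "orders on Coxeter groups associated with sets of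
reflections" (k-intermediate orders, k-Bruhat graphs, k-absolute orders).

All definitions are parametrized by a length function `len : W → ℕ` and a set of
"reflections"; they are instantiated either with a `CoxeterSystem` (`cs.length` and
`cs.IsReflection`) or concretely with the symmetric group `Equiv.Perm (Fin n)`
(inversion number and transpositions).
-/

namespace KBruhatPaper

variable {W : Type*} [Group W]

/-- One step in the directed graph associated with `len` and the set `X ⊆ T`:
`v` is obtained from `u` by multiplying on the left by an element `t ∈ X`,
with `len u < len v`. -/
def Step (len : W → ℕ) (X : Set W) (u v : W) : Prop :=
  ∃ t ∈ X, v = t * u ∧ len u < len v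

/-- The partial order `≤_{L^X}`: `u ≤_{L^X} v` iff `u = v` or there are
`t₁, …, t_r ∈ X` with `len u < len (t₁ u) < ⋯ < len (t_r ⋯ t₁ u)` and
`t_r ⋯ t₁ u = v`.  For `X = T` (all reflections) this is the Bruhat order. -/
def leL (len : W → ℕ) (X : Set W) : W → W → Prop :=
  Relation.ReflTransGen (Step len X)

/-- The strict order `<_{L^X}`. -/
def ltL (len : W → ℕ) (X : Set W) (u v : W) : Prop :=
  leL len X u v ∧ u ≠ v

/-- The covering relation of the poset `(W, ≤_{L^X})`. -/
def CovL (len : W → ℕ) (X : Set W) (u v : W) : Prop :=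
  ltL len X u v ∧ ¬∃ w, ltL len X u w ∧ ltL len X w v

/-- `N(v) = {t ∈ T : len (t * v) < len v}`. -/
def NSet (len : W → ℕ) (T : Set W) (v : W) : Set W :=
  {t ∈ T | len (t * v) < len v}

/-- A reflection subgroup: a subgroup generated by a subset of `T`. -/
def IsReflSubgroup (T : Set W) (W' : Subgroup W) : Prop :=
  ∃ A ⊆ T, W' = Subgroup.closure A

/-- The canonical Coxeter generators `S' = {t ∈ T : N(t) ∩ W' = {t}}` of a
reflection subgroup `W'`. -/
def CanGens (len : W → ℕ) (T : Set W) (W' : Subgroup W) : Set W :=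
  {t ∈ T | NSet len T t ∩ (W' : Set W) = {t}}

/-- The relation `⊑'` on `T`: `t ⊑' t'` iff `t = t'` or there is a dihedral
reflection subgroup `W'` (i.e. with exactly two canonical generators) containing
`t` and `t'`, together with a directed path from `t` to `t'` in the Bruhat graph
restricted to `W'`. -/
def SqLe' (len : W → ℕ) (T : Set W) (t t' : W) : Prop :=
  t = t' ∨ ∃ W' : Subgroup W, IsReflSubgroup T W' ∧ t ∈ W' ∧ t' ∈ W' ∧
    (CanGens len T W').encard = 2 ∧
    ∃ (n : ℕ) (x : ℕ → W), x 0 = t ∧ x n = t' ∧ (∀ i ≤ n, x i ∈ W') ∧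
      ∀ i < n, x i * (x (i + 1))⁻¹ ∈ T ∧ ltL len T (x i) (x (i + 1))

/-- The relation `⊑` on `T`: the transitive closure of `⊑'`. -/
def SqLe (len : W → ℕ) (T : Set W) : W → W → Prop :=
  Relation.TransGen (SqLe' len T)

/-- `X ⊆ T` is an order ideal of `(T, ⊑)`. -/
def IsIdeal (len : W → ℕ) (T : Set W) (X : Set W) : Prop :=
  X ⊆ T ∧ ∀ t t', SqLe len T t t' → t' ∈ X → t ∈ X

/-- `PFactor len J w wup wJ` expresses that `w = w^J ⬝ w_J` is the (unique) parabolic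
factorization of `w` with respect to the set `J` of simple reflections:
`wup = w^J = P^J(w)` and `wJ = w_J ∈ W_J`. -/
def PFactor (len : W → ℕ) (J : Set W) (w wup wJ : W) : Prop :=
  wJ ∈ Subgroup.closure J ∧ (∀ s ∈ J, len wup < len (wup * s)) ∧
    w = wup * wJ ∧ len w = len wup + len wJ

/-- `QFactor len J w wJ wq` expresses that `w = w'_J ⬝ (ᴶw)` is the (unique) parabolic
factorization of `w` with respect to the set `J` of simple reflections:
`wJ = w'_J ∈ W_J` and `wq = ᴶw = Q^J(w)`. -/
def QFactor (len : W → ℕ) (J : Set W) (w wJ wq : W) : Prop :=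
  wJ ∈ Subgroup.closure J ∧ (∀ s ∈ J, len wq < len (s * wq)) ∧
    w = wJ * wq ∧ len w = len wJ + len wq

/-- A chain `e = x₀ → x₁ → ⋯ → x_r = w` of `r` steps in the directed graph with
steps from `X` (for `X = T_k`, a path from `e` to `w` in the `k`-Bruhat graph). -/
def ChainOfLen (len : W → ℕ) (X : Set W) (w : W) (r : ℕ) : Prop :=
  ∃ x : ℕ → W, x 0 = 1 ∧ x r = w ∧ ∀ i < r, Step len X (x i) (x (i + 1))

/-- `HasAbsLen len X w r` : `r` is the `X`-absolute length of `w`, i.e. the least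
number of steps from `X` needed to reach `w` from the identity (for `X = T_k`,
the distance from `e` to `w` in the `k`-Bruhat graph, `ℓ_k(w)`). -/
def HasAbsLen (len : W → ℕ) (X : Set W) (w : W) (r : ℕ) : Prop :=
  IsLeast {r | ChainOfLen len X w r} r

section CoxeterSystem

variable {B : Type*} {M : CoxeterMatrix B}

/-- The set `T` of reflections of a Coxeter system. -/
def TSet (cs : CoxeterSystem M W) : Set W := {t | cs.IsReflection t}

/-- The set `T_k = {t ∈ T : ℓ(t) ≤ 2k + 1}`. -/
def TkSet (cs : CoxeterSystem M W) (k : ℕ) : Set W :=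
  {t | cs.IsReflection t ∧ cs.length t ≤ 2 * k + 1}

/-- The `k`-intermediate order `≤_{L^k}` on `W`. -/
def leLk (cs : CoxeterSystem M W) (k : ℕ) : W → W → Prop :=
  leL cs.length (TkSet cs k)

/-- The strict `k`-intermediate order `<_{L^k}` on `W`. -/
def ltLk (cs : CoxeterSystem M W) (k : ℕ) : W → W → Prop :=
  ltL cs.length (TkSet cs k)

/-- The Bruhat order on `W`. -/
def bruhatLE (cs : CoxeterSystem M W) : W → W → Prop :=
  leL cs.length (TSet cs)

/-- The strict Bruhat order on `W`. -/
def bruhatLT (cs : CoxeterSystem M W) : W → W → Prop :=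
  ltL cs.length (TSet cs)

end CoxeterSystem

section SymmetricGroup

/-- The number of inversions of a permutation of `Fin n`; this is the Coxeter
length of the permutation with respect to the standard Coxeter presentation
of the symmetric group. -/
def invCount {n : ℕ} (w : Equiv.Perm (Fin n)) : ℕ :=
  (Finset.univ.filter fun p : Fin n × Fin n => p.1 < p.2 ∧ w p.2 < w p.1).card

/-- The set of transpositions: the reflections of the symmetric group. -/
def swaps (n : ℕ) : Set (Equiv.Perm (Fin n)) := {σ | σ.IsSwap}

/-- The set of simple transpositions `s_i = (i, i+1)`: the standard Coxeter
generators of the symmetric group. -/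
def simples (n : ℕ) : Set (Equiv.Perm (Fin n)) :=
  {σ | ∃ i j : Fin n, (i : ℕ) + 1 = (j : ℕ) ∧ σ = Equiv.swap i j}

/-- The set `T_k` for the symmetric group: transpositions of length at most `2k + 1`. -/
def swapsK (n k : ℕ) : Set (Equiv.Perm (Fin n)) :=
  {σ | σ.IsSwap ∧ invCount σ ≤ 2 * k + 1}

end SymmetricGroup

end KBruhatPaper

namespace KBruhatAux

open Module Real

noncomputable section

variable {B : Type*} (M : CoxeterMatrix B)

/-- The entry of the generalized Cartan matrix. -/
def car (i j : B) : ℝ := -(2 * cos (π / M i j))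

/-- The simple coroots. -/
def coroot (i : B) : Dual ℝ (B →₀ ℝ) := Finsupp.linearCombination ℝ (car M i)

/-- The simple roots. -/
def al (i : B) : B →₀ ℝ := Finsupp.single i 1

lemma coroot_al (i j : B) : coroot M i (al j) = car M i j := by
  simp [coroot, al]

lemma car_symm (i j : B) : car M i j = car M j i := by
  simp [car, M.symmetric i j]

lemma car_self (i : B) : car M i i = 2 := by
  simp [car]

lemma coroot_self (i : B) : coroot M i (al i) = 2 := by rw [coroot_al, car_self]

/-- The simple reflections acting on the geometric representation. -/
def sig (i : B) : (B →₀ ℝ) ≃ₗ[ℝ] (B →₀ ℝ) := reflection (coroot_self M i)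

lemma sig_apply (i : B) (v : B →₀ ℝ) : sig M i v = v - coroot M i v • al i :=
  reflection_apply _ _

lemma sin_ne (m : ℕ) (hm : 3 ≤ m) : sin (2 * (π / m)) ≠ 0 := by
  have h3 : (3 : ℝ) ≤ m := by exact_mod_cast hm
  apply ne_of_gt
  apply sin_pos_of_pos_of_lt_pi
  · positivity
  · rw [← mul_div_assoc, div_lt_iff₀ (by linarith)]
    nlinarith [pi_pos]

lemma sig_pow (i j : B) : (sig M i * sig M j) ^ M i j = 1 := by
  by_cases hij : i = j
  · subst hij
    simp only [M.diagonal, pow_one]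
    ext1 v
    exact involutive_reflection (coroot_self M i) v
  have h1 : M i j ≠ 1 := M.off_diagonal i j hij
  by_cases h0 : M i j = 0
  · rw [h0, pow_zero]
  apply LinearEquiv.ext
  intro z
  have key := reflection_mul_reflection_pow_apply (coroot_self M i) (coroot_self M j) (M i j) z
  rw [show (sig M i * sig M j) = reflection (coroot_self M i) * reflection (coroot_self M j) from rfl,
    key, coroot_al, coroot_al, ← car_symm M i j]
  by_cases h2 : M i j = 2
  · have : car M i j = 0 := by simp [car, h2]
    rw [this, h2]
    norm_num
    module
  have hm : 3 ≤ M i j := by omega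
  have ht : car M i j * car M i j - 2 = 2 * cos (2 * (π / M i j)) := by
    rw [cos_two_mul, car]; ring
  rw [ht]
  have hs := sin_ne _ hm
  have hmR : (M i j : ℝ) ≠ 0 := by exact_mod_cast h0
  generalize M i j = m at *
  have hS : ∀ n : ℤ, (Polynomial.Chebyshev.S ℝ n).eval (2 * cos (2 * (π / m))) =
      sin ((n + 1) * (2 * (π / m))) / sin (2 * (π / m)) := by
    intro n
    rw [eq_div_iff hs, Polynomial.Chebyshev.S_two_mul_real_cos]
  rcases Nat.even_or_odd' m with ⟨q, rfl | rfl⟩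
  · have e1 : (((2 * q : ℕ) : ℤ) - 2) / 2 = q - 1 := by omega
    have e2 : (((2 * q : ℕ) : ℤ) - 1) / 2 = q - 1 := by omega
    rw [e1, e2, hS (q - 1)]
    have : sin ((((q : ℤ) - 1 : ℤ) + 1 : ℝ) * (2 * (π / (2 * q : ℕ)))) = 0 := by
      push_cast at hmR ⊢
      rw [show ((q : ℝ) - 1 + 1) * (2 * (π / (2 * q))) = π by
        have hq : (q : ℝ) ≠ 0 := fun h => hmR (by rw [h, mul_zero])
        field_simp; ring]
      exact sin_pi
    rw [this]
    simp
  · have e1 : (((2 * q + 1 : ℕ) : ℤ) - 1) / 2 = q := by omega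
    have e2 : (((2 * q + 1 : ℕ) : ℤ) - 3) / 2 = q - 1 := by omega
    have e3 : (((2 * q + 1 : ℕ) : ℤ)) / 2 = q := by omega
    have e4 : (((2 * q + 1 : ℕ) : ℤ) - 2) / 2 = q - 1 := by omega
    rw [e1, e2, e3, e4, hS (q - 1), hS q]
    have : sin ((((q : ℤ) - 1 : ℤ) + 1 : ℝ) * (2 * (π / (2 * q + 1 : ℕ)))) =
        - sin ((((q : ℤ) : ℝ) + 1 : ℝ) * (2 * (π / (2 * q + 1 : ℕ)))) := by
      push_cast at hmR ⊢
      rw [← sin_two_pi_sub]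
      congr 1
      field_simp
      ring
    rw [this]
    simp [neg_div]


/-- Coefficient sequence for alternating products. -/
def ac (κ : ℝ) : ℕ → ℝ
  | 0 => 0
  | 1 => 1
  | n + 2 => κ * ac κ (n + 1) - ac κ n

lemma ac_two (n : ℕ) : ac 2 n = n ∧ ac 2 (n + 1) = n + 1 := by
  induction n with
  | zero => simp [ac]
  | succ n ih =>
    refine ⟨by rw [ih.2]; push_cast; ring, ?_⟩
    rw [ac, ih.1, ih.2]; push_cast; ring

lemma ac_sin (θ : ℝ) (n : ℕ) : ac (2 * cos θ) n * sin θ = sin (n * θ) ∧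
    ac (2 * cos θ) (n + 1) * sin θ = sin ((n + 1) * θ) := by
  induction n with
  | zero => simp [ac]
  | succ n ih =>
    refine ⟨by rw [ih.2]; push_cast; ring_nf, ?_⟩
    rw [ac, sub_mul, mul_assoc, ih.1, ih.2]
    have h1 : sin (((n + 1 : ℕ) + 1) * θ) = sin ((n + 1) * θ + θ) := by push_cast; ring_nf
    have h2 : sin (n * θ) = sin ((n + 1) * θ - θ) := by ring_nf
    rw [h1, h2, sin_add, sin_sub]
    ring

lemma ac_nonneg (m : ℕ) (hm : m ≠ 1) (n : ℕ) (hn : m ≠ 0 → n ≤ m) :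
    0 ≤ ac (2 * cos (π / m)) n := by
  by_cases h0 : m = 0
  · subst h0
    simp only [Nat.cast_zero, div_zero, cos_zero, mul_one]
    rw [(ac_two n).1]
    positivity
  have hn := hn h0
  have hm2 : (2 : ℝ) ≤ m := by
    have : 2 ≤ m := by omega
    exact_mod_cast this
  have hnm : (n : ℝ) ≤ m := by exact_mod_cast hn
  have hs : 0 < sin (π / m) := by
    apply sin_pos_of_pos_of_lt_pi
    · positivity
    · rw [div_lt_iff₀ (by linarith)]
      nlinarith [pi_pos]
  have h2 : 0 ≤ sin (n * (π / m)) := by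
    apply sin_nonneg_of_nonneg_of_le_pi
    · positivity
    · rw [← mul_div_assoc, div_le_iff₀ (by linarith)]
      nlinarith [pi_pos]
  rw [← (ac_sin (π / m) n).1] at h2
  exact nonneg_of_mul_nonneg_left h2 hs

variable {M} {W : Type*} [Group W] (cs : CoxeterSystem M W)

/-- The geometric representation. -/
def rep : W →* ((B →₀ ℝ) ≃ₗ[ℝ] (B →₀ ℝ)) := cs.lift ⟨sig M, sig_pow M⟩

lemma rep_simple (i : B) : rep cs (cs.simple i) = sig M i :=
  cs.lift_apply_simple (sig_pow M) i

lemma rep_mul (u v : W) (x : B →₀ ℝ) : rep cs (u * v) x = rep cs u (rep cs v x) := by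
  rw [map_mul, LinearEquiv.mul_apply]

lemma rep_one (x : B →₀ ℝ) : rep cs 1 x = x := by
  rw [map_one]; rfl

lemma sig_al (i : B) : sig M i (al i) = - al i := by
  rw [sig_apply, coroot_self]; module

lemma rep_mul_simple_al (w : W) (i : B) :
    rep cs (w * cs.simple i) (al i) = - rep cs w (al i) := by
  rw [rep_mul, rep_simple, sig_al, map_neg]

lemma rep_alt (i j : B) (p : ℕ) :
    rep cs (cs.wordProd (CoxeterSystem.alternatingWord i j p)) (al i) =
      if Even p then ac (2 * cos (π / M i j)) (p + 1) • al i + ac (2 * cos (π / M i j)) p • al j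
      else ac (2 * cos (π / M i j)) (p + 1) • al j + ac (2 * cos (π / M i j)) p • al i := by
  induction p with
  | zero => simp [CoxeterSystem.alternatingWord, rep_one, ac]
  | succ p ih =>
    rw [CoxeterSystem.alternatingWord_succ', cs.wordProd_cons, rep_mul, ih, rep_simple, sig_apply]
    have e1 : coroot M i (al j) = -(2 * cos (π / M i j)) := coroot_al M i j
    have e2 : coroot M j (al i) = -(2 * cos (π / M i j)) := by
      rw [coroot_al, car_symm]; rfl
    by_cases hp : Even p
    · have hp' : ¬ Even (p + 1) := by simpa [Nat.even_add_one] using hp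
      simp only [hp, hp', if_true, if_false, map_add, map_smul, coroot_self, e1, e2, ac, smul_eq_mul]
      module
    · have hp' : Even (p + 1) := by simpa [Nat.even_add_one] using hp
      simp only [hp, hp', if_true, if_false, map_add, map_smul, coroot_self, e1, e2, ac, smul_eq_mul]
      module

lemma al_nonneg (i : B) : 0 ≤ al i := by
  classical
  intro k
  simp only [al, Finsupp.coe_zero, Pi.zero_apply]
  rw [Finsupp.single_apply]
  split_ifs <;> norm_num

lemma comb_nonneg {a b : ℝ} (ha : 0 ≤ a) (hb : 0 ≤ b) {x y : B →₀ ℝ} (hx : 0 ≤ x) (hy : 0 ≤ y) :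
    0 ≤ a • x + b • y := by
  intro k
  have := hx k
  have := hy k
  simp only [Finsupp.coe_zero, Pi.zero_apply, Finsupp.coe_add, Finsupp.coe_smul, Pi.add_apply,
    Pi.smul_apply, smul_eq_mul] at *
  positivity

lemma len_gt_of_not {w : W} {i : B} (h : ¬ cs.length (w * cs.simple i) + 1 = cs.length w) :
    cs.length w < cs.length (w * cs.simple i) := by
  rcases cs.length_mul_simple w i with h' | h' <;> omega

/-- Positivity of roots. -/
theorem pos_of_asc (n : ℕ) : ∀ (w : W), cs.length w = n → ∀ i : B,
    cs.length w < cs.length (w * cs.simple i) → 0 ≤ rep cs w (al i) := by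
  induction n using Nat.strong_induction_on with
  | _ n IH =>
  intro w hw i hi
  by_cases hw1 : w = 1
  · subst hw1; rw [rep_one]; exact al_nonneg i
  obtain ⟨j, hj⟩ := cs.exists_rightDescent_of_ne_one hw1
  have hij : i ≠ j := by
    rintro rfl
    exact absurd hj (not_lt.mpr hi.le)
  have hj' : cs.length (w * cs.simple j) + 1 = cs.length w := cs.isRightDescent_iff.mp hj
  let b : ℕ → W := fun p => cs.wordProd (CoxeterSystem.alternatingWord i j p)
  have hbs : ∀ p, b (p + 1) = cs.simple (if Even p then j else i) * b p := by
    intro p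
    simp only [b]
    rw [CoxeterSystem.alternatingWord_succ', cs.wordProd_cons]
  have hbs' : ∀ p, w * (b (p + 1))⁻¹ = w * (b p)⁻¹ * cs.simple (if Even p then j else i) := by
    intro p
    rw [hbs, mul_inv_rev, cs.inv_simple, mul_assoc]
  have hb0 : b 0 = 1 := by simp [b, CoxeterSystem.alternatingWord]
  let P : ℕ → Prop := fun p => cs.length (w * (b p)⁻¹) + p = cs.length w
  have hP1 : P 1 := by
    have : b 1 = cs.simple j := by rw [hbs 0, hb0]; simp
    simp only [P, this, cs.inv_simple]
    exact hj'
  classical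
  let p := Nat.findGreatest P (cs.length w)
  have hp : P p := Nat.findGreatest_spec (m := 1) (by omega) hP1
  have hp1 : 1 ≤ p := Nat.le_findGreatest (by omega) hP1
  have hpn : ¬ P (p + 1) := by
    intro h
    have h2 : p + 1 ≤ p := Nat.le_findGreatest (by have : _ = _ := h; omega) h
    omega
  clear_value p
  obtain ⟨q, rfl⟩ : ∃ q, p = q + 1 := ⟨p - 1, by omega⟩
  set v := w * (b (q + 1))⁻¹ with hv
  have hpv : cs.length v + (q + 1) = cs.length w := hp
  have hx : cs.length v < cs.length (v * cs.simple (if Even (q + 1) then j else i)) := by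
    apply len_gt_of_not
    intro h
    apply hpn
    simp only [P]
    rw [hbs', ← hv]
    omega
  have hy : cs.length v < cs.length (v * cs.simple (if Even q then j else i)) := by
    have e : v * cs.simple (if Even q then j else i) = w * (b q)⁻¹ := by
      rw [hv, hbs', cs.simple_mul_simple_cancel_right]
    rw [e]
    have h1 := cs.length_le_length_mul_add_right w (b q)⁻¹
    have h2 : cs.length (b q)⁻¹ ≤ q := by
      rw [cs.length_inv]
      refine (cs.length_wordProd_le _).trans ?_
      rw [CoxeterSystem.length_alternatingWord]
    omega
  have hIi : 0 ≤ rep cs v (al i) := by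
    apply IH (cs.length v) (by omega) v rfl
    by_cases hq : Even q
    · simpa [Nat.even_add_one, hq] using hx
    · simpa [hq] using hy
  have hIj : 0 ≤ rep cs v (al j) := by
    apply IH (cs.length v) (by omega) v rfl
    by_cases hq : Even q
    · simpa [hq] using hy
    · simpa [Nat.even_add_one, hq] using hx
  have hbound : M i j ≠ 0 → q + 2 ≤ M i j := by
    intro h0
    by_contra hlt
    have hM : M j i ≠ 0 := by rwa [M.symmetric j i]
    apply cs.not_isReduced_alternatingWord j i hM (m := q + 2) (by rw [M.symmetric j i]; omega)
    have e : cs.wordProd (CoxeterSystem.alternatingWord j i (q + 2)) = b (q + 1) * cs.simple i := by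
      rw [CoxeterSystem.alternatingWord_succ, cs.wordProd_concat]
    have e2 : w * cs.simple i = v * (b (q + 1) * cs.simple i) := by
      rw [hv]; group
    have h3 := cs.length_mul_le v (b (q + 1) * cs.simple i)
    rw [← e2] at h3
    have h4 := cs.length_wordProd_le (CoxeterSystem.alternatingWord j i (q + 2))
    unfold CoxeterSystem.IsReduced
    rw [CoxeterSystem.length_alternatingWord] at *
    rw [e] at *
    omega
  have hM1 : M i j ≠ 1 := M.off_diagonal i j hij
  have ha : 0 ≤ ac (2 * cos (π / M i j)) (q + 2) := ac_nonneg _ hM1 _ hbound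
  have hb : 0 ≤ ac (2 * cos (π / M i j)) (q + 1) :=
    ac_nonneg _ hM1 _ (fun h => by have := hbound h; omega)
  have ew : w = v * b (q + 1) := by rw [hv]; group
  rw [ew, rep_mul, rep_alt]
  split_ifs
  · rw [map_add, map_smul, map_smul]
    exact comb_nonneg ha hb hIi hIj
  · rw [map_add, map_smul, map_smul]
    exact comb_nonneg ha hb hIj hIi

lemma neg_of_desc (w : W) (i : B) (h : cs.length (w * cs.simple i) < cs.length w) :
    rep cs w (al i) ≤ 0 := by
  have := pos_of_asc cs _ (w * cs.simple i) rfl i (by rwa [cs.simple_mul_simple_cancel_right])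
  rw [rep_mul_simple_al] at this
  exact neg_nonneg.mp this

lemma al_ne (i : B) : al i ≠ 0 := by
  simp [al]

lemma root_ne (w : W) (i : B) : rep cs w (al i) ≠ 0 := by
  intro h
  exact al_ne i ((LinearEquiv.map_eq_zero_iff _).mp h)

lemma root_dich (w : W) (i : B) : 0 ≤ rep cs w (al i) ∨ rep cs w (al i) ≤ 0 := by
  rcases lt_or_gt_of_ne (cs.length_mul_simple_ne w i) with h | h
  · exact Or.inr (neg_of_desc cs w i h)
  · exact Or.inl (pos_of_asc cs _ w rfl i h)

lemma asc_of_pos (w : W) (i : B) (h : 0 ≤ rep cs w (al i)) :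
    cs.length w < cs.length (w * cs.simple i) := by
  rcases lt_or_gt_of_ne (cs.length_mul_simple_ne w i) with h' | h'
  · exact absurd (le_antisymm (neg_of_desc cs w i h') h) (root_ne cs w i)
  · exact h'

lemma eq_one_of_pos (g : W) (h : ∀ i, 0 ≤ rep cs g (al i)) : g = 1 := by
  by_contra hg
  obtain ⟨i, hi⟩ := cs.exists_rightDescent_of_ne_one hg
  have h1 := asc_of_pos cs g i (h i)
  have h2 : cs.length (g * cs.simple i) < cs.length g := hi
  omega

lemma refl_act (w : W) (i : B) (v : B →₀ ℝ) :
    rep cs (w * cs.simple i * w⁻¹) v = v - coroot M i (rep cs w⁻¹ v) • rep cs w (al i) := by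
  rw [rep_mul, rep_mul, rep_simple, sig_apply, map_sub, map_smul, ← rep_mul, mul_inv_cancel,
    rep_one]

lemma al_apply_self (i : B) : al i i = 1 := by simp [al]

lemma al_apply_ne {i k : B} (h : i ≠ k) : al i k = 0 := by
  simp [al, Finsupp.single_apply, h]

/-- If a root is a multiple of a simple root, then the reflections agree. -/
lemma refl_eq_of_prop (w : W) (i j : B) (h : ∀ k, k ≠ j → rep cs w (al i) k = 0) :
    w * cs.simple i * w⁻¹ = cs.simple j := by
  set r := rep cs w (al i) with hr
  have hr1 : r = r j • al j := by
    ext k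
    by_cases hk : k = j
    · subst hk; simp [al_apply_self]
    · simp [h k hk, al_apply_ne (Ne.symm hk)]
  have hrj : r j ≠ 0 := by
    intro h0
    rw [h0, zero_smul] at hr1
    exact root_ne cs w i hr1
  set t := w * cs.simple i * w⁻¹ with ht
  have htr : rep cs t r = - r := by
    rw [ht, rep_mul, hr, ← rep_mul cs w⁻¹ w, inv_mul_cancel, rep_one, rep_mul_simple_al]
  have hta : rep cs t (al j) = - al j := by
    rw [hr1, map_smul, ← smul_neg] at htr
    exact smul_right_injective _ hrj htr
  have key : t * cs.simple j = 1 := by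
    apply eq_one_of_pos cs
    intro k
    by_cases hk : k = j
    · subst hk
      rw [rep_mul_simple_al, hta, neg_neg]
      exact al_nonneg k
    · rcases root_dich cs (t * cs.simple j) k with h' | h'
      · exact h'
      · exfalso
        have h2 := h' k
        rw [rep_mul, rep_simple, sig_apply, map_sub, map_smul, hta, refl_act] at h2
        simp only [← hr, Finsupp.coe_sub, Pi.sub_apply, Finsupp.coe_smul, Pi.smul_apply,
          Finsupp.coe_neg, Pi.neg_apply, al_apply_self, h k hk, al_apply_ne (Ne.symm hk),
          smul_eq_mul, Finsupp.coe_zero, Pi.zero_apply] at h2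
        norm_num at h2
  have := mul_eq_one_iff_eq_inv.mp key
  rwa [cs.inv_simple] at this

lemma refl_eq_of_flip (w : W) (i j : B) (h : 0 ≤ rep cs w (al i))
    (h' : rep cs (cs.simple j * w) (al i) ≤ 0) : w * cs.simple i * w⁻¹ = cs.simple j := by
  apply refl_eq_of_prop
  intro k hk
  have h1 := h k
  have h2 := h' k
  rw [rep_mul, rep_simple, sig_apply] at h2
  simp only [Finsupp.coe_sub, Pi.sub_apply, Finsupp.coe_smul, Pi.smul_apply,
    al_apply_ne (Ne.symm hk), smul_eq_mul, Finsupp.coe_zero, Pi.zero_apply] at h1 h2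
  linarith

lemma down_of_neg (n : ℕ) : ∀ (u : W), cs.length u = n → ∀ (w : W) (i : B),
    0 ≤ rep cs w (al i) → rep cs (u⁻¹ * w) (al i) ≤ 0 →
    cs.length (w * cs.simple i * w⁻¹ * u) < cs.length u := by
  induction n with
  | zero =>
    intro u hu w i h h'
    rw [cs.length_eq_zero_iff] at hu
    subst hu
    rw [inv_one, one_mul] at h'
    exact absurd (le_antisymm h' h) (root_ne cs w i)
  | succ n IH =>
    intro u hu w i h h'
    have hu1 : u ≠ 1 := by rintro rfl; simp at hu
    obtain ⟨j, hj⟩ := cs.exists_leftDescent_of_ne_one hu1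
    have hj2 := cs.isLeftDescent_iff.mp hj
    rcases root_dich cs (cs.simple j * w) i with hp | hp
    · have := IH (cs.simple j * u) (by omega) (cs.simple j * w) i hp (by
        rw [show (cs.simple j * u)⁻¹ * (cs.simple j * w) = u⁻¹ * w by group]
        exact h')
      rw [show cs.simple j * w * cs.simple i * (cs.simple j * w)⁻¹ * (cs.simple j * u)
        = cs.simple j * (w * cs.simple i * w⁻¹ * u) by group] at this
      have h3 := cs.length_simple_mul (w * cs.simple i * w⁻¹ * u) j
      omega
    · rw [refl_eq_of_flip cs w i j h hp]
      omega

lemma up_of_pos (u w : W) (i : B) (h : 0 ≤ rep cs w (al i)) (h' : 0 ≤ rep cs (u⁻¹ * w) (al i)) :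
    cs.length u < cs.length (w * cs.simple i * w⁻¹ * u) := by
  have := down_of_neg cs _ (w * cs.simple i * w⁻¹ * u) rfl w i h (by
    rw [show (w * cs.simple i * w⁻¹ * u)⁻¹ * w = u⁻¹ * w * (cs.simple i)⁻¹ by group, cs.inv_simple,
      rep_mul_simple_al]
    exact neg_nonpos.mpr h')
  rwa [show w * cs.simple i * w⁻¹ * (w * cs.simple i * w⁻¹ * u) =
    w * (cs.simple i * cs.simple i) * w⁻¹ * u by group, cs.simple_mul_simple_self,
    mul_one, mul_inv_cancel, one_mul] at this

lemma pos_of_up (u w : W) (i : B) (h : 0 ≤ rep cs w (al i))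
    (h' : cs.length u < cs.length (w * cs.simple i * w⁻¹ * u)) : 0 ≤ rep cs (u⁻¹ * w) (al i) := by
  rcases root_dich cs (u⁻¹ * w) i with h1 | h1
  · exact h1
  · have := down_of_neg cs _ u rfl w i h h1
    omega

lemma exists_pos_root {t : W} (ht : cs.IsReflection t) :
    ∃ w i, t = w * cs.simple i * w⁻¹ ∧ 0 ≤ rep cs w (al i) := by
  obtain ⟨w, i, rfl⟩ := ht
  rcases root_dich cs w i with h | h
  · exact ⟨w, i, rfl, h⟩
  · refine ⟨w * cs.simple i, i, ?_, ?_⟩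
    · rw [mul_inv_rev, cs.simple_mul_simple_cancel_right, cs.inv_simple, mul_assoc]
    · rw [rep_mul_simple_al]; exact neg_nonneg.mpr h


/-- A step in the Bruhat graph raising the length by one, by a reflection of length at most `L`. -/
def SS (L : ℕ) (x y : W) : Prop :=
  ∃ t, cs.IsReflection t ∧ cs.length t ≤ L ∧ y = t * x ∧ cs.length y = cs.length x + 1

lemma SS_mono {L L' : ℕ} (h : L ≤ L') {x y : W} (hxy : SS cs L x y) : SS cs L' x y := by
  obtain ⟨t, h1, h2, h3, h4⟩ := hxy
  exact ⟨t, h1, h2.trans h, h3, h4⟩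

lemma SS_simple {L : ℕ} (hL : 1 ≤ L) (x : W) (j : B)
    (h : cs.length x < cs.length (cs.simple j * x)) : SS cs L x (cs.simple j * x) := by
  refine ⟨cs.simple j, cs.isReflection_simple j, by rw [cs.length_simple]; exact hL, rfl, ?_⟩
  rcases cs.length_simple_mul x j with h' | h' <;> omega

lemma exch {t x : W} (ht : cs.IsReflection t) (j : B) (h1 : cs.length (t * x) = cs.length x + 1)
    (h2 : cs.length x < cs.length (cs.simple j * x))
    (h3 : cs.length (cs.simple j * (t * x)) < cs.length (t * x)) : t = cs.simple j := by
  obtain ⟨w, i, rfl, hw⟩ := exists_pos_root cs ht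
  have hp := pos_of_up cs x w i hw (by omega)
  rcases root_dich cs (cs.simple j * w) i with h | h
  · have := up_of_pos cs (cs.simple j * x) (cs.simple j * w) i h (by
      rw [show (cs.simple j * x)⁻¹ * (cs.simple j * w) = x⁻¹ * w by group]; exact hp)
    rw [show cs.simple j * w * cs.simple i * (cs.simple j * w)⁻¹ * (cs.simple j * x)
        = cs.simple j * (w * cs.simple i * w⁻¹ * x) by group] at this
    omega
  · exact refl_eq_of_flip cs w i j hw h

lemma SS_conj {L : ℕ} {y y' : W} (j : B) (h : SS cs L y y')
    (hl : cs.length (cs.simple j * y') = cs.length (cs.simple j * y) + 1) :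
    SS cs (L + 2) (cs.simple j * y) (cs.simple j * y') := by
  obtain ⟨t, h1, h2, rfl, h4⟩ := h
  refine ⟨cs.simple j * t * (cs.simple j)⁻¹, h1.conj _, ?_, by group, hl⟩
  have e1 := cs.length_mul_le (cs.simple j * t) (cs.simple j)⁻¹
  have e2 := cs.length_mul_le (cs.simple j) t
  rw [cs.length_inv, cs.length_simple] at e1
  rw [cs.length_simple] at e2
  omega

open Relation

lemma lift_asc {L : ℕ} {x y : W} (j : B) (h : ReflTransGen (SS cs L) x y)
    (hx : cs.length x < cs.length (cs.simple j * x)) :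
    (cs.length y < cs.length (cs.simple j * y) →
      ReflTransGen (SS cs (L + 2)) (cs.simple j * x) (cs.simple j * y)) ∧
    (cs.length (cs.simple j * y) < cs.length y →
      ReflTransGen (SS cs (L + 2)) (cs.simple j * x) y) := by
  induction h with
  | refl => exact ⟨fun _ => .refl, fun h => by omega⟩
  | @tail y z hxy hyz ih =>
    have hyz' : SS cs (L + 2) y z := SS_mono cs (by omega) hyz
    have hl : cs.length z = cs.length y + 1 := by obtain ⟨_, _, _, _, h⟩ := hyz; exact h
    have ey := cs.length_simple_mul y j
    have ez := cs.length_simple_mul z j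
    constructor
    · intro hz
      rcases ey with ey | ey
      · exact (ih.1 (by omega)).tail (SS_conj cs j hyz (by omega))
      · exact ((ih.2 (by omega)).tail hyz').tail (SS_simple cs (by omega) z j hz)
    · intro hz
      rcases ey with ey | ey
      · have e : z = cs.simple j * y := by
          obtain ⟨t, h1, h2, rfl, h4⟩ := hyz
          rw [exch cs h1 j h4 (by omega) hz]
        have := ih.1 (by omega)
        rwa [← e] at this
      · exact (ih.2 (by omega)).tail hyz'

lemma lift_desc {L : ℕ} {x y : W} (j : B) (h : ReflTransGen (SS cs L) x y)
    (hx : cs.length (cs.simple j * x) < cs.length x) :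
    (cs.length (cs.simple j * y) < cs.length y →
      ReflTransGen (SS cs (L + 2)) (cs.simple j * x) (cs.simple j * y)) ∧
    (cs.length y < cs.length (cs.simple j * y) →
      ReflTransGen (SS cs (L + 2)) (cs.simple j * x) y) := by
  induction h with
  | refl => exact ⟨fun _ => .refl, fun h => by omega⟩
  | @tail y z hxy hyz ih =>
    have hyz' : SS cs (L + 2) y z := SS_mono cs (by omega) hyz
    have hl : cs.length z = cs.length y + 1 := by obtain ⟨_, _, _, _, h⟩ := hyz; exact h
    have ey := cs.length_simple_mul y j
    have ez := cs.length_simple_mul z j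
    constructor
    · intro hz
      rcases ey with ey | ey
      · have e : z = cs.simple j * y := by
          obtain ⟨t, h1, h2, rfl, h4⟩ := hyz
          rw [exch cs h1 j h4 (by omega) hz]
        have := ih.2 (by omega)
        rwa [e, cs.simple_mul_simple_cancel_left]
      · exact (ih.1 (by omega)).tail (SS_conj cs j hyz (by omega))
    · intro hz
      rcases ey with ey | ey
      · exact (ih.2 (by omega)).tail hyz'
      · have h1 := SS_simple cs (L := L + 2) (by omega) (cs.simple j * y) j
          (by rw [cs.simple_mul_simple_cancel_left]; omega)
        rw [cs.simple_mul_simple_cancel_left] at h1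
        exact ((ih.1 (by omega)).tail h1).tail hyz'

theorem sat_chain (n : ℕ) : ∀ t : W, cs.IsReflection t → cs.length t = n → ∀ u : W,
    cs.length u < cs.length (t * u) → ReflTransGen (SS cs n) u (t * u) := by
  induction n using Nat.strong_induction_on with
  | _ n IH =>
  intro t ht hn u hu
  by_cases hn1 : n = 1
  · rw [hn1] at hn
    obtain ⟨j, rfl⟩ := cs.length_eq_one_iff.mp hn
    exact .single (SS_simple cs (by omega) u j hu)
  have ht1 : t ≠ 1 := by
    rintro rfl
    rw [one_mul] at hu
    omega
  obtain ⟨j, hj⟩ := cs.exists_leftDescent_of_ne_one ht1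
  have hj2 := cs.isLeftDescent_iff.mp hj
  have hne : t ≠ cs.simple j := by
    rintro rfl
    rw [cs.length_simple] at hn
    omega
  obtain ⟨w, i, htw, hw⟩ := exists_pos_root cs ht
  have hsw : 0 ≤ rep cs (cs.simple j * w) (al i) := by
    rcases root_dich cs (cs.simple j * w) i with h | h
    · exact h
    · exact absurd (htw.trans (refl_eq_of_flip cs w i j hw h)) hne
  have htneg : rep cs t (al j) ≤ 0 := by
    apply neg_of_desc
    rw [← cs.length_inv, mul_inv_rev, cs.inv_simple, ht.inv]
    omega
  set f := coroot M i (rep cs w⁻¹ (al j)) with hf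
  have hact : rep cs t (al j) = al j - f • rep cs w (al i) := by rw [htw, refl_act]
  have hfpos : 0 < f := by
    by_contra hneg
    have h1 := htneg j
    have h2 := hw j
    rw [hact] at h1
    simp only [Finsupp.coe_sub, Pi.sub_apply, Finsupp.coe_smul, Pi.smul_apply, al_apply_self,
      smul_eq_mul, Finsupp.coe_zero, Pi.zero_apply] at h1 h2
    nlinarith
  have hstneg : rep cs (cs.simple j * t) (al j) ≤ 0 := by
    rcases root_dich cs (cs.simple j * t) j with h | h
    · exfalso
      apply hne
      rw [htw]
      apply refl_eq_of_prop
      intro k hk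
      have h1 := htneg k
      have h2 := h k
      rw [rep_mul, rep_simple, sig_apply] at h2
      rw [hact] at h1 h2
      simp only [Finsupp.coe_sub, Pi.sub_apply, Finsupp.coe_smul, Pi.smul_apply,
        al_apply_ne (Ne.symm hk), smul_eq_mul, Finsupp.coe_zero, Pi.zero_apply] at h1 h2
      have : f * rep cs w (al i) k = 0 := by linarith
      exact (mul_eq_zero.mp this).resolve_left hfpos.ne'
    · exact h
  have hlen : cs.length (cs.simple j * t * cs.simple j) + 2 = n := by
    rcases cs.length_mul_simple (cs.simple j * t) j with h | h
    · have h1 := pos_of_asc cs _ (cs.simple j * t) rfl j (by omega)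
      exact absurd (le_antisymm hstneg h1) (root_ne cs _ j)
    · omega
  have ht' : cs.IsReflection (cs.simple j * t * cs.simple j) := by
    have := ht.conj (cs.simple j)
    rwa [cs.inv_simple] at this
  have hupos := pos_of_up cs u w i hw (by rw [← htw]; exact hu)
  have hup' : cs.length (cs.simple j * u) <
      cs.length (cs.simple j * t * cs.simple j * (cs.simple j * u)) := by
    have := up_of_pos cs (cs.simple j * u) (cs.simple j * w) i hsw (by
      rw [show (cs.simple j * u)⁻¹ * (cs.simple j * w) = u⁻¹ * w by group]; exact hupos)
    rw [show cs.simple j * w * cs.simple i * (cs.simple j * w)⁻¹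
        = cs.simple j * (w * cs.simple i * w⁻¹) * (cs.simple j)⁻¹ by group, cs.inv_simple,
        ← htw] at this
    exact this
  have chain := IH _ (by omega) (cs.simple j * t * cs.simple j) ht' rfl (cs.simple j * u) hup'
  have esv : cs.simple j * t * cs.simple j * (cs.simple j * u) = cs.simple j * (t * u) := by
    rw [mul_assoc (cs.simple j * t), cs.simple_mul_simple_cancel_left, mul_assoc]
  rw [esv] at chain
  set L := cs.length (cs.simple j * t * cs.simple j) with hL
  have c1 := cs.simple_mul_simple_cancel_left (w := u) j
  have c2 := cs.simple_mul_simple_cancel_left (w := t * u) j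
  rcases cs.length_simple_mul u j with e1 | e1 <;>
  rcases cs.length_simple_mul (t * u) j with e2 | e2
  · have := (lift_desc cs j chain (by rw [c1]; omega)).1 (by rw [c2]; omega)
    rwa [c1, c2, hlen] at this
  · have s1 := SS_simple cs (L := n) (by omega) u j (by omega)
    have s2 := SS_simple cs (L := n) (by omega) (cs.simple j * (t * u)) j (by rw [c2]; omega)
    rw [c2] at s2
    exact ((ReflTransGen.single s1).trans
      (ReflTransGen.mono (fun _ _ h => SS_mono cs (by omega) h) _ _ chain)).tail s2
  · exfalso
    have p1 : 0 ≤ rep cs (t * u)⁻¹ (al j) := by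
      apply pos_of_asc cs _ _ rfl
      rw [cs.length_inv, ← cs.inv_simple, ← mul_inv_rev, cs.length_inv]
      omega
    have p2 : rep cs u⁻¹ (al j) ≤ 0 := by
      apply neg_of_desc
      rw [← cs.inv_simple, ← mul_inv_rev, cs.length_inv, cs.length_inv]
      omega
    have p3 : rep cs (t * u)⁻¹ (al j) ≤ 0 := by
      rw [mul_inv_rev, ht.inv, rep_mul, hact, map_sub, map_smul, ← rep_mul]
      intro k
      have q1 := p2 k
      have q2 := hupos k
      simp only [Finsupp.coe_sub, Pi.sub_apply, Finsupp.coe_smul, Pi.smul_apply,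
        smul_eq_mul, Finsupp.coe_zero, Pi.zero_apply] at q1 q2 ⊢
      nlinarith
    exact root_ne cs _ j (le_antisymm p3 p1)
  · have := (lift_asc cs j chain (by rw [c1]; omega)).1 (by rw [c2]; omega)
    rwa [c1, c2, hlen] at this

open KBruhatPaper

lemma SS_to_step {k : ℕ} {x y : W} (h : SS cs (2 * k + 1) x y) :
    Step cs.length (TkSet cs k) x y := by
  obtain ⟨t, h1, h2, h3, h4⟩ := h
  exact ⟨t, ⟨h1, h2⟩, h3, by omega⟩

lemma sat_of_le {k : ℕ} {u v : W} (h : leL cs.length (TkSet cs k) u v) :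
    ReflTransGen (SS cs (2 * k + 1)) u v := by
  induction h with
  | refl => exact .refl
  | tail _ h ih =>
    obtain ⟨t, ⟨h1, h2⟩, rfl, h4⟩ := h
    exact ih.trans (ReflTransGen.mono (fun _ _ h => SS_mono cs h2 h) _ _ (sat_chain cs _ t h1 rfl _ h4))

lemma le_len {k : ℕ} {u v : W} (h : ReflTransGen (SS cs (2 * k + 1)) u v) :
    cs.length u ≤ cs.length v := by
  induction h with
  | refl => exact le_rfl
  | tail _ h ih =>
    obtain ⟨t, h1, h2, h3, h4⟩ := h
    omega

lemma cov_len {k : ℕ} {u v : W} (h : CovL cs.length (TkSet cs k) u v) :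
    cs.length v = cs.length u + 1 := by
  obtain ⟨⟨hle, hne⟩, hno⟩ := h
  rcases ReflTransGen.cases_head (sat_of_le cs hle) with h | ⟨w, huw, hwv⟩
  · exact absurd h hne
  have hl : cs.length w = cs.length u + 1 := by obtain ⟨_, _, _, _, h⟩ := huw; exact h
  by_cases hw : w = v
  · rw [← hw, hl]
  · exfalso
    apply hno
    refine ⟨w, ⟨.single (SS_to_step cs huw), ?_⟩, ⟨ReflTransGen.mono (fun _ _ h => SS_to_step cs h) _ _ hwv, hw⟩⟩
    rintro rfl
    omega

lemma seq_of_sat {L : ℕ} {u v : W} (h : ReflTransGen (SS cs L) u v) :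
    ∃ (n : ℕ) (x : ℕ → W), x 0 = u ∧ x n = v ∧ cs.length v = cs.length u + n ∧
      ∀ i < n, SS cs L (x i) (x (i + 1)) := by
  induction h with
  | refl => exact ⟨0, fun _ => u, rfl, rfl, rfl, by simp⟩
  | @tail y z _ h ih =>
    obtain ⟨n, x, h0, hn, hl, hx⟩ := ih
    have hz : cs.length z = cs.length y + 1 := by obtain ⟨_, _, _, _, h⟩ := h; exact h
    refine ⟨n + 1, fun i => if i ≤ n then x i else z, by simp [h0], by simp, by omega, ?_⟩
    intro i hi
    by_cases hin : i < n
    · have h1 : i ≤ n := by omega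
      have h2 : i + 1 ≤ n := by omega
      simp only [h1, h2, if_true]
      exact hx i hin
    · have : i = n := by omega
      subst this
      simp only [le_refl, if_true, Nat.not_succ_le_self, if_false, hn]
      exact h

end

end KBruhatAux


open KBruhatPaper

/-- the poset `(W, ≤_{L^k})` is graded with rank function `ℓ`: every
maximal chain (chain of covering relations) from `u` to `v` has length
`ℓ(v) - ℓ(u)`; in particular if `u <_{L^k} v` there is a chain from `u` to `v` of
steps in `T_k` each raising the length by exactly `1`. -/
theorem stmt_4 {B W : Type*} [Group W] {M : CoxeterMatrix B} (cs : CoxeterSystem M W)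
    (k : ℕ) :
    (∀ (u v : W) (n : ℕ) (x : ℕ → W), x 0 = u → x n = v →
      (∀ i < n, CovL cs.length (TkSet cs k) (x i) (x (i + 1))) →
      leLk cs k u v →
      cs.length v = cs.length u + n) ∧
    (∀ u v : W, ltLk cs k u v →
      ∃ (n : ℕ) (x : ℕ → W), x 0 = u ∧ x n = v ∧ cs.length v = cs.length u + n ∧
        ∀ i < n, x (i + 1) * (x i)⁻¹ ∈ TkSet cs k ∧
          cs.length (x (i + 1)) = cs.length (x i) + 1) := by
  refine ⟨?_, ?_⟩
  · intro u v n x h0 hn hc _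
    have key : ∀ i ≤ n, cs.length (x i) = cs.length u + i := by
      intro i
      induction i with
      | zero => intro _; rw [h0, add_zero]
      | succ i ih =>
        intro hi
        rw [KBruhatAux.cov_len cs (hc i (by omega)), ih (by omega)]
        omega
    rw [← hn]
    exact key n le_rfl
  · intro u v h
    obtain ⟨n, x, h0, hn, hl, hx⟩ := KBruhatAux.seq_of_sat cs (KBruhatAux.sat_of_le cs h.1)
    refine ⟨n, x, h0, hn, hl, fun i hi => ?_⟩
    obtain ⟨t, h1, h2, h3, h4⟩ := hx i hi
    refine ⟨?_, h4⟩
    rw [h3, mul_inv_cancel_right]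
    exact ⟨h1, h2⟩
end

section
/- Let (W,S) be a Coxeter system, J ⊆ S and k ∈ ℕ. Then the parabolic projection P^J is order preserving on (W, ≤_{L^k}): for all u, v ∈ W, u ≤_{L^k} v implies P^J(u) ≤_{L^k} P^J(v). -/
open KBruhatPaper

namespace KB
open Real
variable {B : Type*} {W : Type*} [Group W] {M : CoxeterMatrix B}

noncomputable def phi (M : CoxeterMatrix B) (i : B) : (B →₀ ℝ) →ₗ[ℝ] ℝ :=
  Finsupp.linearCombination ℝ (fun j => -2 * cos (π / (M i j : ℝ)))

noncomputable def al (i : B) : B →₀ ℝ := Finsupp.single i 1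

noncomputable def sg (M : CoxeterMatrix B) (i : B) : Module.End ℝ (B →₀ ℝ) :=
  LinearMap.id - (phi M i).smulRight (al i)

lemma sg_apply (i : B) (v : B →₀ ℝ) : sg M i v = v - phi M i v • al i := by
  simp [sg]

lemma phi_al (i j : B) : phi M i (al j) = -2 * cos (π / (M i j : ℝ)) := by
  simp [phi, al]

lemma phi_self (i : B) : phi M i (al i) = 2 := by
  simp [phi_al]

lemma sg_self (i : B) : sg M i (al i) = - al i := by
  rw [sg_apply, phi_self]; module

lemma sg_sq (i : B) : sg M i * sg M i = 1 := by
  refine LinearMap.ext fun v => ?_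
  rw [Module.End.mul_apply, sg_apply i v, map_sub, map_smul, sg_self, sg_apply]
  simp

lemma M_ge {i j : B} (h : i ≠ j) (h0 : M i j ≠ 0) : 2 ≤ M i j := by
  have := M.off_diagonal i j h
  omega

lemma theta_pos {i j : B} (h : i ≠ j) (h0 : M i j ≠ 0) : 0 < sin (π / (M i j : ℝ)) := by
  have h2 : (2:ℝ) ≤ (M i j : ℝ) := by exact_mod_cast M_ge h h0
  apply sin_pos_of_pos_of_lt_pi
  · positivity
  · rw [div_lt_iff₀ (by linarith)]
    nlinarith [pi_pos]

lemma pow_al (i j : B) (n : ℕ) :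
    sin (π / (M i j : ℝ)) • ((sg M i * sg M j) ^ n) (al i) =
      sin ((2 * n + 1) * (π / (M i j : ℝ))) • al i + sin (2 * n * (π / (M i j : ℝ))) • al j ∧
    sin (π / (M i j : ℝ)) • ((sg M i * sg M j) ^ n) (al j) =
      (- sin (2 * n * (π / (M i j : ℝ)))) • al i - sin ((2 * n - 1) * (π / (M i j : ℝ))) • al j := by
  have e1 : sg M j (al i) = al i + (2 * cos (π / (M i j : ℝ))) • al j := by
    rw [sg_apply, phi_al, M.symmetric j i]; module
  have e2 : sg M i (al j) = al j + (2 * cos (π / (M i j : ℝ))) • al i := by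
    rw [sg_apply, phi_al]; module
  set θ := π / (M i j : ℝ)
  induction n with
  | zero => simp
  | succ n ih =>
    obtain ⟨ih1, ih2⟩ := ih
    rw [pow_succ']
    simp only [Module.End.mul_apply]
    have key : ∀ X, sin θ • sg M i (sg M j X) = sg M i (sg M j (sin θ • X)) := by
      intro X; rw [map_smul, map_smul]
    rw [key, key, ih1, ih2]
    simp only [map_add, map_sub, map_smul, e1, e2, sg_self, map_neg]
    have s1 : sin ((2 * ((n+1:ℕ):ℝ) + 1) * θ) = 2 * cos θ * sin (2 * ((n+1:ℕ):ℝ) * θ) - sin ((2 * n + 1) * θ) := by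
      have := sin_add (2 * ((n+1:ℕ):ℝ) * θ) θ
      have h2 := sin_sub (2 * ((n+1:ℕ):ℝ) * θ) θ
      rw [show (2 * ((n+1:ℕ):ℝ) * θ) + θ = (2 * ((n+1:ℕ):ℝ) + 1) * θ by ring] at this
      rw [show (2 * ((n+1:ℕ):ℝ) * θ) - θ = (2 * n + 1) * θ by push_cast; ring] at h2
      rw [this, h2]; ring
    have s2 : sin (2 * ((n+1:ℕ):ℝ) * θ) = 2 * cos θ * sin ((2 * n + 1) * θ) - sin (2 * n * θ) := by
      have := sin_add ((2 * n + 1) * θ) θ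
      have h2 := sin_sub ((2 * n + 1) * θ) θ
      rw [show ((2 * n + 1) * θ) + θ = 2 * ((n+1:ℕ):ℝ) * θ by push_cast; ring] at this
      rw [show ((2 * n + 1) * θ) - θ = 2 * n * θ by ring] at h2
      rw [this, h2]; ring
    have s3 : sin ((2 * n - 1) * θ) = 2 * cos θ * sin (2 * n * θ) - sin ((2 * n + 1) * θ) := by
      have := sin_add (2 * n * θ) θ
      have h2 := sin_sub (2 * n * θ) θ
      rw [show (2 * n * θ) + θ = (2 * n + 1) * θ by ring] at this
      rw [show (2 * n * θ) - θ = (2 * n - 1) * θ by ring] at h2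
      rw [this, h2]; ring
    have s4 : sin ((2 * ((n+1:ℕ):ℝ) - 1) * θ) = sin ((2 * n + 1) * θ) := by
      congr 1; push_cast; ring
    rw [s4, s1, s2, s3]
    constructor <;> module

lemma liftable : M.IsLiftable (sg M) := by
  intro i j
  by_cases hij : i = j
  · subst hij; simp [sg_sq]
  by_cases h0 : M i j = 0
  · simp [h0]
  have hs := theta_pos hij h0
  have hm : (M i j : ℝ) * (π / (M i j : ℝ)) = π := by
    field_simp
  obtain ⟨h1, h2⟩ := pow_al (M := M) i j (M i j)
  rw [show (2 * (M i j : ℝ) + 1) * (π / (M i j : ℝ)) = (π / (M i j : ℝ)) + 2 * π by linear_combination 2 * hm,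
    show (2 * (M i j : ℝ)) * (π / (M i j : ℝ)) = 2 * π by linear_combination 2 * hm,
    sin_add_two_pi, sin_two_pi] at h1
  rw [show (2 * (M i j : ℝ) - 1) * (π / (M i j : ℝ)) = -(π / (M i j : ℝ)) + 2 * π by linear_combination 2 * hm,
    show (2 * (M i j : ℝ)) * (π / (M i j : ℝ)) = 2 * π by linear_combination 2 * hm,
    sin_add_two_pi, sin_two_pi, sin_neg] at h2
  have f1 : phi M i (al j) = -2 * cos (π / (M i j : ℝ)) := phi_al _ _
  have f2 : phi M j (al i) = -2 * cos (π / (M i j : ℝ)) := by rw [phi_al, M.symmetric]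
  set θ := π / (M i j : ℝ)
  set T := sg M i * sg M j with hT
  have g1 : (T ^ (M i j)) (al i) = al i := by
    apply smul_right_injective _ hs.ne'
    simpa using h1
  have g2 : (T ^ (M i j)) (al j) = al j := by
    apply smul_right_injective _ hs.ne'
    simpa using h2
  refine LinearMap.ext fun v => ?_
  have hsc := sin_sq_add_cos_sq θ
  set x := (phi M i v + cos θ * phi M j v) / (2 * sin θ ^ 2) with hx
  set y := (phi M j v + cos θ * phi M i v) / (2 * sin θ ^ 2) with hy
  obtain ⟨v0, hv0⟩ : ∃ v0, v0 = v - x • al i - y • al j := ⟨_, rfl⟩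
  have k1 : phi M i v0 = 0 := by
    rw [hv0]; simp only [map_sub, map_smul, f1, phi_self, smul_eq_mul, hx, hy]
    field_simp
    linear_combination (phi M i v) * hsc
  have k2 : phi M j v0 = 0 := by
    rw [hv0]; simp only [map_sub, map_smul, f2, phi_self, smul_eq_mul, hx, hy]
    field_simp
    linear_combination (phi M j v) * hsc
  have k3 : T v0 = v0 := by
    rw [hT, Module.End.mul_apply, sg_apply j, k2, sg_apply]; simp [k1]
  have k4 : ∀ n : ℕ, (T ^ n) v0 = v0 := by
    intro n
    induction n with
    | zero => simp
    | succ n ih => rw [pow_succ, Module.End.mul_apply, k3, ih]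
  have : v = v0 + x • al i + y • al j := by rw [hv0]; abel
  rw [this]
  simp [k4, g1, g2]

variable (cs : CoxeterSystem M W)

noncomputable def rho : W →* Module.End ℝ (B →₀ ℝ) := cs.lift ⟨sg M, liftable⟩

lemma rho_simple (i : B) : rho cs (cs.simple i) = sg M i := by
  simp [rho]

lemma rho_inv_apply (w : W) (v : B →₀ ℝ) : rho cs w⁻¹ (rho cs w v) = v := by
  rw [← Module.End.mul_apply, ← map_mul]; simp

lemma rho_apply_inv (w : W) (v : B →₀ ℝ) : rho cs w (rho cs w⁻¹ v) = v := by
  rw [← Module.End.mul_apply, ← map_mul]; simp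

lemma rho_mul (w w' : W) (v : B →₀ ℝ) : rho cs (w * w') v = rho cs w (rho cs w' v) := by
  simp

lemma rho_simple_self (i : B) : rho cs (cs.simple i) (al i) = - al i := by
  rw [rho_simple, sg_self]

/-- dihedral coefficients -/
noncomputable def U (c : ℝ) : ℕ → ℝ
  | 0 => 0
  | 1 => 1
  | n + 2 => 2 * c * U c (n + 1) - U c n

lemma U_sin (θ : ℝ) (n : ℕ) : U (cos θ) n * sin θ = sin (n * θ) := by
  induction n using Nat.twoStepInduction with
  | zero => simp [U]
  | one => simp [U]
  | more n h1 h2 =>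
    have a1 := sin_add ((n+1:ℕ) * θ) θ
    have a2 := sin_sub ((n+1:ℕ) * θ) θ
    rw [show ((n+1:ℕ) * θ) + θ = ((n+2:ℕ):ℝ) * θ by push_cast; ring] at a1
    rw [show ((n+1:ℕ) * θ) - θ = (n:ℝ) * θ by push_cast; ring] at a2
    rw [a1, U, sub_mul, mul_assoc, h2, h1, a2]; ring

lemma U_one (n : ℕ) : U 1 n = n := by
  induction n using Nat.twoStepInduction with
  | zero => simp [U]
  | one => simp [U]
  | more n h1 h2 => rw [U, h1, h2]; push_cast; ring

lemma U_nonneg {i j : B} (h : i ≠ j) (n : ℕ) (hn : M i j = 0 ∨ n ≤ M i j) :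
    0 ≤ U (cos (π / (M i j : ℝ))) n := by
  by_cases h0 : M i j = 0
  · simp [h0, U_one]
  have hs := theta_pos h h0
  have hn : n ≤ M i j := by tauto
  have hn' : (n : ℝ) ≤ M i j := by exact_mod_cast hn
  have hm : (M i j : ℝ) * (π / (M i j : ℝ)) = π := by
    field_simp
  have : 0 ≤ U (cos (π / (M i j : ℝ))) n * sin (π / (M i j : ℝ)) := by
    rw [U_sin]
    have : 0 ≤ π / (M i j : ℝ) := by positivity
    apply sin_nonneg_of_nonneg_of_le_pi
    · positivity
    · nlinarith
  exact nonneg_of_mul_nonneg_left this hs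

lemma alt_al (i j : B) (n : ℕ) :
    rho cs (cs.wordProd (CoxeterSystem.alternatingWord i j n)) (al i) =
      if Even n then U (cos (π / (M i j : ℝ))) (n + 1) • al i + U (cos (π / (M i j : ℝ))) n • al j
      else U (cos (π / (M i j : ℝ))) n • al i + U (cos (π / (M i j : ℝ))) (n + 1) • al j := by
  have e1 : sg M j (al i) = al i + (2 * cos (π / (M i j : ℝ))) • al j := by
    rw [sg_apply, phi_al, M.symmetric j i]; module
  have e2 : sg M i (al j) = al j + (2 * cos (π / (M i j : ℝ))) • al i := by
    rw [sg_apply, phi_al]; module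
  induction n with
  | zero => simp [U, CoxeterSystem.alternatingWord]
  | succ n ih =>
    rw [CoxeterSystem.alternatingWord_succ', cs.wordProd_cons, rho_mul, ih]
    by_cases hn : Even n
    · have : ¬ Even (n + 1) := by rw [Nat.even_add_one]; simpa
      simp only [hn, this, if_true, if_false, rho_simple, map_add, map_smul, e1, sg_self, U]
      module
    · have : Even (n + 1) := by rw [Nat.even_add_one]; exact hn
      simp only [hn, this, if_true, if_false, rho_simple, map_add, map_smul, e2, sg_self, U]
      module
end KB

namespace KB
open Real
variable {B : Type*} {W : Type*} [Group W] {M : CoxeterMatrix B}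
variable (cs : CoxeterSystem M W)

lemma dec (n : ℕ) : ∀ (w : W) (i j : B), cs.length w = n → ¬ cs.IsRightDescent w i →
    ∃ (v : W) (k : ℕ), w = v * cs.wordProd (CoxeterSystem.alternatingWord i j k) ∧
      cs.length w = cs.length v + k ∧ ¬ cs.IsRightDescent v i ∧ ¬ cs.IsRightDescent v j := by
  induction n with
  | zero =>
    intro w i j hw hi
    refine ⟨w, 0, by simp [CoxeterSystem.alternatingWord], by simp, hi, ?_⟩
    rw [CoxeterSystem.IsRightDescent]; omega
  | succ n ih =>
    intro w i j hw hi
    by_cases hj : cs.IsRightDescent w j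
    · have h1 := cs.isRightDescent_iff.1 hj
      have h2 := cs.isRightDescent_iff_not_isRightDescent_mul.1 hj
      obtain ⟨v, k, e, hl, a, b⟩ := ih (w * cs.simple j) j i (by omega) h2
      refine ⟨v, k + 1, ?_, by omega, b, a⟩
      rw [CoxeterSystem.alternatingWord_succ, cs.wordProd_concat, ← mul_assoc, ← e]
      simp
    · exact ⟨w, 0, by simp [CoxeterSystem.alternatingWord], by simp, hi, hj⟩

lemma al_nonneg (i : B) : (0 : B →₀ ℝ) ≤ al i := by
  simp [al]

lemma al_ne (i : B) : (al i : B →₀ ℝ) ≠ 0 := by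
  simp [al]

lemma pos (n : ℕ) : ∀ (w : W) (i : B), cs.length w = n → ¬ cs.IsRightDescent w i →
    0 ≤ rho cs w (al i) := by
  induction n using Nat.strong_induction_on with
  | _ n ih =>
    intro w i hw hi
    by_cases h1 : w = 1
    · subst h1; simpa using al_nonneg i
    obtain ⟨j, hj⟩ := cs.exists_rightDescent_of_ne_one h1
    have hij : i ≠ j := by rintro rfl; exact hi hj
    obtain ⟨v, k, e, hl, a, b⟩ := dec cs n w i j hw hi
    have hk : k ≠ 0 := by
      rintro rfl
      simp [CoxeterSystem.alternatingWord] at e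
      subst e; exact b hj
    have pi := ih (cs.length v) (by omega) v i rfl a
    have pj := ih (cs.length v) (by omega) v j rfl b
    have hk : M i j = 0 ∨ k + 1 ≤ M i j := by
      by_contra! hcon
      have := cs.not_isReduced_alternatingWord j i (m := k + 1) (by rw [M.symmetric]; exact hcon.1)
        (by rw [M.symmetric]; exact hcon.2)
      apply this
      have h3 := cs.not_isRightDescent_iff.1 hi
      have h4 : w * cs.simple i = v * cs.wordProd (CoxeterSystem.alternatingWord j i (k + 1)) := by
        rw [CoxeterSystem.alternatingWord_succ, cs.wordProd_concat, ← mul_assoc, ← e]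
      have h5 := cs.length_mul_le v (cs.wordProd (CoxeterSystem.alternatingWord j i (k + 1)))
      have h6 := cs.length_wordProd_le (CoxeterSystem.alternatingWord j i (k + 1))
      rw [← h4] at h5
      rw [CoxeterSystem.IsReduced]
      rw [CoxeterSystem.length_alternatingWord] at h6 ⊢
      omega
    have u1 := U_nonneg (M := M) hij (k + 1) hk
    have u0 := U_nonneg (M := M) hij k (by omega)
    rw [e, rho_mul, alt_al]
    split_ifs <;> rw [map_add, map_smul, map_smul] <;>
      exact add_nonneg (smul_nonneg (by assumption) (by assumption))
        (smul_nonneg (by assumption) (by assumption))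

lemma pos_of_not {w : W} {i : B} (h : ¬ cs.length (w * cs.simple i) < cs.length w) :
    0 ≤ rho cs w (al i) := pos cs _ w i rfl h

lemma neg_of {w : W} {i : B} (h : cs.length (w * cs.simple i) < cs.length w) :
    rho cs w (al i) ≤ 0 := by
  have := pos_of_not cs (w := w * cs.simple i) (i := i) (by simp; omega)
  rw [rho_mul, rho_simple_self, map_neg] at this
  exact neg_nonneg.1 this

/-- `b` is a root of the reflection `t`. -/
def IsRt (t : W) (b : B →₀ ℝ) : Prop :=
  ∃ g j, t = g * cs.simple j * g⁻¹ ∧ b = rho cs g (al j)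

variable {cs}

lemma IsRt.conj {t : W} {b : B →₀ ℝ} (h : IsRt cs t b) (w : W) :
    IsRt cs (w * t * w⁻¹) (rho cs w b) := by
  obtain ⟨g, j, rfl, rfl⟩ := h
  exact ⟨w * g, j, by group, by rw [rho_mul]⟩

lemma IsRt.neg {t : W} {b : B →₀ ℝ} (h : IsRt cs t b) : IsRt cs t (-b) := by
  obtain ⟨g, j, rfl, rfl⟩ := h
  refine ⟨g * cs.simple j, j, by simp [mul_assoc], ?_⟩
  rw [rho_mul, rho_simple_self, map_neg]

lemma IsRt.sign {t : W} {b : B →₀ ℝ} (h : IsRt cs t b) : 0 ≤ b ∨ b ≤ 0 := by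
  obtain ⟨g, j, rfl, rfl⟩ := h
  by_cases h : cs.length (g * cs.simple j) < cs.length g
  · exact Or.inr (neg_of cs h)
  · exact Or.inl (pos_of_not cs h)

lemma IsRt.ne {t : W} {b : B →₀ ℝ} (h : IsRt cs t b) : b ≠ 0 := by
  obtain ⟨g, j, rfl, rfl⟩ := h
  intro h
  have := rho_inv_apply cs g (al j)
  rw [h, map_zero] at this
  exact al_ne j this.symm

lemma IsRt.apply {t : W} {b : B →₀ ℝ} (h : IsRt cs t b) (v : B →₀ ℝ) :
    ∃ c : ℝ, rho cs t v = v - c • b := by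
  obtain ⟨g, j, rfl, rfl⟩ := h
  refine ⟨phi M j (rho cs g⁻¹ v), ?_⟩
  rw [rho_mul, rho_mul, rho_simple, sg_apply, map_sub, map_smul, rho_apply_inv]

lemma IsRt.self {t : W} {b : B →₀ ℝ} (h : IsRt cs t b) : rho cs t b = - b := by
  obtain ⟨g, j, rfl, rfl⟩ := h
  rw [rho_mul, rho_mul, rho_inv_apply, rho_simple_self, map_neg]

lemma isRt_simple (i : B) : IsRt cs (cs.simple i) (al i) := ⟨1, i, by simp, by simp⟩

lemma exists_rt {t : W} (h : cs.IsReflection t) : ∃ b, IsRt cs t b ∧ 0 ≤ b := by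
  obtain ⟨g, j, rfl⟩ := h
  have : IsRt cs (g * cs.simple j * g⁻¹) (rho cs g (al j)) := ⟨g, j, rfl, rfl⟩
  rcases this.sign with h | h
  · exact ⟨_, this, h⟩
  · exact ⟨_, this.neg, neg_nonneg.2 h⟩

lemma sg_coord (p i : B) (h : i ≠ p) (v : B →₀ ℝ) : (rho cs (cs.simple p) v) i = v i := by
  rw [rho_simple, sg_apply]; simp [al, h.symm]

lemma IsRt.eq_simple {t : W} {b : B →₀ ℝ} (h : IsRt cs t b) (hb : 0 ≤ b) {p : B}
    (hp : rho cs (cs.simple p) b ≤ 0) : t = cs.simple p := by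
  have e : b = b p • al p := by
    ext i
    by_cases hi : i = p
    · subst hi; simp [al]
    · have h1 := hp i
      rw [sg_coord p i hi] at h1
      have h2 := hb i
      simp only [Finsupp.coe_zero, Pi.zero_apply] at h1 h2
      simp [al, Ne.symm hi]; linarith
  have hc : b p ≠ 0 := by
    intro h0; rw [h0, zero_smul] at e; exact h.ne e
  have ht : rho cs t (al p) = - al p := by
    have := h.self
    rw [e, map_smul] at this
    apply smul_right_injective _ hc
    simpa using this
  suffices hg : t * cs.simple p = 1 by
    rw [← mul_one t, ← cs.simple_mul_simple_self p, ← mul_assoc, hg, one_mul]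
  by_contra hg
  obtain ⟨s, hs⟩ := cs.exists_rightDescent_of_ne_one hg
  have h1 := neg_of cs hs
  by_cases hsp : s = p
  · subst hsp
    rw [rho_mul, rho_simple_self, map_neg, ht, neg_neg] at h1
    exact al_ne s (le_antisymm h1 (al_nonneg s))
  · obtain ⟨c, hc⟩ := h.apply (rho cs (cs.simple p) (al s))
    rw [rho_mul, hc] at h1
    have h2 := h1 s
    rw [e] at h2
    simp only [Finsupp.sub_apply, sg_coord p s hsp] at h2
    simp [al, Ne.symm hsp] at h2
    linarith

lemma inv1 (n : ℕ) : ∀ (w t : W) (b : B →₀ ℝ), cs.length w = n → IsRt cs t b → 0 ≤ b →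
    rho cs w⁻¹ b ≤ 0 → cs.length (t * w) < cs.length w := by
  induction n with
  | zero =>
    intro w t b hw h hb hn
    rw [cs.length_eq_zero_iff] at hw
    subst hw
    simp at hn
    exact absurd (le_antisymm hn hb) h.ne
  | succ n ih =>
    intro w t b hw h hb hn
    obtain ⟨p, hp⟩ := cs.exists_leftDescent_of_ne_one (w := w) (by rintro rfl; simp at hw)
    have h' := h.conj (cs.simple p)
    have hp' := cs.isLeftDescent_iff.1 hp
    rcases h'.sign with hs | hs
    · have := ih (cs.simple p * w) _ _ (by omega) h' hs (by
        rw [← rho_mul]; simpa using hn)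
      have e : cs.simple p * t * (cs.simple p)⁻¹ * (cs.simple p * w) = cs.simple p * (t * w) := by
        group
      rw [e] at this
      have := cs.length_simple_mul (t * w) p
      omega
    · rw [h.eq_simple hb hs]; exact hp

lemma tt {t : W} (h : cs.IsReflection t) (w : W) : t * (t * w) = w := by
  rw [← mul_assoc, h.mul_self, one_mul]

lemma IsRt.refl {t : W} {b : B →₀ ℝ} (h : IsRt cs t b) : cs.IsReflection t := by
  obtain ⟨g, j, rfl, rfl⟩ := h
  exact ⟨g, j, rfl⟩

lemma IsRt.inv_iff {t : W} {b : B →₀ ℝ} (h : IsRt cs t b) (hb : 0 ≤ b) (w : W) :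
    cs.length (t * w) < cs.length w ↔ rho cs w⁻¹ b ≤ 0 := by
  refine ⟨fun hl => ?_, inv1 _ w t b rfl h hb⟩
  rcases (h.conj w⁻¹).sign with hs | hs
  · have := inv1 _ (t * w) t b rfl h hb (by
      rw [mul_inv_rev, rho_mul, h.refl.inv, h.self, map_neg]; exact neg_nonpos.2 hs)
    rw [tt h.refl] at this
    omega
  · exact hs

lemma IsRt.not_inv {t : W} {b : B →₀ ℝ} (h : IsRt cs t b) (hb : 0 ≤ b) {w : W} 
    (hl : ¬ cs.length (t * w) < cs.length w) : 0 ≤ rho cs w⁻¹ b := by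
  rw [h.inv_iff hb] at hl
  exact (h.conj w⁻¹).sign.resolve_right hl

lemma n2 {t : W} (ht : cs.IsReflection t) {p : B} (hp : t ≠ cs.simple p) {w : W} :
    cs.length (cs.simple p * t * w) < cs.length (cs.simple p * w) ↔
      cs.length (t * w) < cs.length w := by
  obtain ⟨b, h, hb⟩ := exists_rt ht
  have h' := h.conj (cs.simple p)
  have hb' : 0 ≤ rho cs (cs.simple p) b := by
    rcases h'.sign with hs | hs
    · exact hs
    · exact absurd (h.eq_simple hb hs) hp
  rw [h.inv_iff hb, ← show rho cs (cs.simple p * w)⁻¹ (rho cs (cs.simple p) b) = rho cs w⁻¹ b by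
    rw [← rho_mul]; simp, ← h'.inv_iff hb']
  simp [mul_assoc]

lemma n5a {t a : W} (ht : cs.IsReflection t) {s : B}
    (hs : cs.length a < cs.length (a * cs.simple s)) 
    (hl : cs.length (t * a) < cs.length a) :
    cs.length (t * (a * cs.simple s)) < cs.length (a * cs.simple s) := by
  obtain ⟨b, h, hb⟩ := exists_rt ht
  rw [h.inv_iff hb] at hl ⊢
  by_contra hcon
  have h1 := (h.conj (a * cs.simple s)⁻¹).sign.resolve_right hcon
  have h2 := (h.conj a⁻¹).neg.eq_simple (p := s) (neg_nonneg.2 hl) (by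
    rw [map_neg, ← rho_mul]; simpa using h1)
  have h3 : t * a = a * cs.simple s := by rw [← h2]; group
  rw [← h.inv_iff hb, h3] at hl
  omega

lemma n5b {t a : W} (ht : cs.IsReflection t) {s : B}
    (hl : ¬ cs.length (t * a) < cs.length a)
    (hl' : cs.length (t * (a * cs.simple s)) < cs.length (a * cs.simple s)) :
    t * a = a * cs.simple s := by
  obtain ⟨b, h, hb⟩ := exists_rt ht
  have h1 := h.not_inv hb hl
  rw [h.inv_iff hb] at hl'
  have h2 := (h.conj a⁻¹).eq_simple (p := s) h1 (by
    rw [← rho_mul]; simpa using hl')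
  rw [← h2]; group

lemma factX {t a : W} (ht : cs.IsReflection t) {p : B}
    (h1 : cs.length (cs.simple p * t) < cs.length t)
    (h2 : cs.length (cs.simple p * a) < cs.length a)
    (h3 : ¬ cs.length (t * a) < cs.length a) :
    cs.length (cs.simple p * (t * a)) < cs.length (t * a) := by
  obtain ⟨b, h, hb⟩ := exists_rt ht
  have hp := isRt_simple (cs := cs) p
  have hp0 := al_nonneg p
  have k3 := h.not_inv hb h3
  rw [hp.inv_iff hp0] at h1 h2 ⊢
  rw [ht.inv] at h1
  rw [mul_inv_rev, rho_mul, ht.inv]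
  obtain ⟨c, hc⟩ := h.apply (al p)
  have hc0 : 0 ≤ c := by
    by_contra! hneg
    have : 0 ≤ (-c) • b := smul_nonneg (by linarith) hb
    have h4 : al p ≤ 0 := by
      calc al p ≤ al p + (-c) • b := le_add_of_nonneg_right this
        _ = rho cs t (al p) := by rw [hc]; module
        _ ≤ 0 := h1
    exact al_ne p (le_antisymm h4 hp0)
  rw [hc, map_sub, map_smul]
  exact sub_nonpos.2 (h2.trans (smul_nonneg hc0 k3))

lemma red {t : W} (ht : cs.IsReflection t) (h1 : cs.length t ≠ 1) :
    ∃ (p : B) (t' : W), cs.IsReflection t' ∧ t' * cs.simple p = cs.simple p * t ∧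
      cs.length (cs.simple p * t) < cs.length t ∧ cs.length t' + 2 ≤ cs.length t ∧
      t ≠ cs.simple p := by
  have hodd := ht.odd_length
  obtain ⟨p, hp⟩ := cs.exists_leftDescent_of_ne_one (w := t) (by rintro rfl; simp at hodd)
  have hp' := cs.isLeftDescent_iff.1 hp
  have hne : t ≠ cs.simple p := by rintro rfl; simp at h1
  have h0 : 1 < cs.length t := by
    obtain ⟨k, hk⟩ := hodd
    omega
  have hlen : cs.length (t * cs.simple p) = cs.length (cs.simple p * t) := by
    rw [← cs.length_inv (t * cs.simple p)]; simp [ht.inv]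
  have := factX (a := cs.simple p) ht hp (by simp) (by
    rw [hlen, cs.length_simple]; omega)
  refine ⟨p, cs.simple p * t * (cs.simple p)⁻¹, ht.conj _, by group, hp, ?_, hne⟩
  simp only [cs.inv_simple, mul_assoc]
  omega

end KB

namespace KB
variable {B : Type*} {W : Type*} [Group W] {M : CoxeterMatrix B} {cs : CoxeterSystem M W}

lemma nlt {t : W} (ht : cs.IsReflection t) {w : W} (h : ¬ cs.length (t * w) < cs.length w) :
    cs.length w < cs.length (t * w) := by
  have := ht.length_mul_right_ne w
  omega

lemma step_of {k : ℕ} {t x : W} (ht : cs.IsReflection t) (hk : cs.length t ≤ 2 * k + 1)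
    (h : cs.length x < cs.length (t * x)) : Step cs.length (TkSet cs k) x (t * x) :=
  ⟨t, ⟨ht, hk⟩, rfl, h⟩

lemma le_of {k : ℕ} {t x : W} (ht : cs.IsReflection t) (hk : cs.length t ≤ 2 * k + 1)
    (h : cs.length x < cs.length (t * x)) : leLk cs k x (t * x) :=
  Relation.ReflTransGen.single (step_of ht hk h)

lemma le_simple {k : ℕ} {p : B} {x : W}
    (h : cs.length x < cs.length (cs.simple p * x)) : leLk cs k x (cs.simple p * x) :=
  le_of (cs.isReflection_simple p) (by simp) h

lemma le_trans' {k : ℕ} {x y z : W} (h : leLk cs k x y) (h' : leLk cs k y z) : leLk cs k x z :=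
  Relation.ReflTransGen.trans h h'

lemma le_mono {k : ℕ} {x y : W} (h : leLk cs k x y) : leLk cs (k + 1) x y := by
  refine Relation.ReflTransGen.mono ?_ _ _ h
  rintro a b ⟨t, ⟨ht, hk⟩, h⟩
  exact ⟨t, ⟨ht, by omega⟩, h⟩

lemma conj_step {k : ℕ} {t x : W} {p : B} (ht : cs.IsReflection t)
    (hk : cs.length t ≤ 2 * k + 1) (h : cs.length x < cs.length (t * x)) (hp : t ≠ cs.simple p) :
    leLk cs (k + 1) (cs.simple p * x) (cs.simple p * (t * x)) := by
  have e : cs.simple p * (t * x) = cs.simple p * t * (cs.simple p)⁻¹ * (cs.simple p * x) := by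
    group
  have h1 : ¬ cs.length (cs.simple p * t * x) < cs.length (cs.simple p * x) := by
    rw [n2 ht hp]; omega
  rw [mul_assoc, e] at h1
  rw [e]
  refine le_of (ht.conj _) ?_ (nlt (ht.conj _) h1)
  have h2 := cs.length_mul_le (cs.simple p * t) (cs.simple p)⁻¹
  have h3 := cs.length_mul_le (cs.simple p) t
  simp only [cs.inv_simple, cs.length_simple] at h2 h3 ⊢
  omega

lemma lift_up {k : ℕ} {x y : W} {p : B} (h : leLk cs k x y)
    (hy : cs.length y < cs.length (cs.simple p * y)) :
    leLk cs (k + 1) (cs.simple p * x) (cs.simple p * y) := by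
  unfold leLk leL at h
  induction h using Relation.ReflTransGen.head_induction_on with
  | refl => exact Relation.ReflTransGen.refl
  | head h h' ih =>
    obtain ⟨t, ⟨ht, hk⟩, rfl, hl⟩ := h
    by_cases hp : t = cs.simple p
    · subst hp
      exact le_trans' (le_mono h') (le_simple hy)
    · exact le_trans' (conj_step ht hk hl hp) ih

lemma lift_down {k : ℕ} {x y : W} {p : B} (h : leLk cs k x y)
    (hx : cs.length (cs.simple p * x) < cs.length x) :
    leLk cs (k + 1) (cs.simple p * x) (cs.simple p * y) := by
  unfold leLk leL at h
  induction h with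
  | refl => exact Relation.ReflTransGen.refl
  | tail h' h ih =>
    obtain ⟨t, ⟨ht, hk⟩, rfl, hl⟩ := h
    by_cases hp : t = cs.simple p
    · subst hp
      have h1 : leLk cs (k + 1) (cs.simple p * x) x := by
        have := le_simple (cs := cs) (k := k + 1) (p := p) (x := cs.simple p * x) (by simpa using hx)
        simpa using this
      simpa using le_trans' h1 (le_mono h')
    · exact le_trans' ih (conj_step ht hk hl hp)

lemma lemA (k : ℕ) : ∀ (t a : W) (s : B), cs.IsReflection t → cs.length t ≤ 2 * k + 1 →
    cs.length a < cs.length (t * a) → cs.length a < cs.length (a * cs.simple s) →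
    cs.length (t * (a * cs.simple s)) < cs.length (t * a) →
    leLk cs k a (t * (a * cs.simple s)) := by
  induction k with
  | zero =>
    intro t a s ht hk h1 h2 h3
    have h4 : t * a = a * cs.simple s := by
      apply n5b ht (by omega)
      obtain ⟨p, rfl⟩ := cs.length_eq_one_iff.1
        (show cs.length t = 1 by have := ht.odd_length.pos; omega)
      have := cs.length_simple_mul a p
      omega
    rw [← h4, tt ht]
    exact Relation.ReflTransGen.refl
  | succ k ih =>
    intro t a s ht hk h1 h2 h3
    by_cases hta : t * a = a * cs.simple s
    · rw [← hta, tt ht]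
      exact Relation.ReflTransGen.refl
    have htas : cs.length (a * cs.simple s) < cs.length (t * (a * cs.simple s)) :=
      nlt ht fun h => hta (n5b ht (by omega) h)
    by_cases hl1 : cs.length t = 1
    · exfalso
      obtain ⟨p, rfl⟩ := cs.length_eq_one_iff.1 hl1
      have := cs.length_simple_mul a p
      omega
    obtain ⟨p, t', ht', e, hpt, hlen, hne⟩ := red ht hl1
    have hP := cs.isReflection_simple p
    have hne' : t' ≠ cs.simple p := by
      rintro rfl
      exact hne (mul_left_cancel e).symm
    have e1 : ∀ w, cs.simple p * (t * w) = t' * (cs.simple p * w) := by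
      intro w; rw [← mul_assoc, ← mul_assoc, e]
    have e2 : ∀ w, t * (cs.simple p * w) = cs.simple p * (t' * w) := by
      intro w
      have := e1 (cs.simple p * w)
      rw [cs.simple_mul_simple_cancel_left] at this
      rw [← this, cs.simple_mul_simple_cancel_left]
    have h' : cs.length (cs.simple p * a) < cs.length (t' * (cs.simple p * a)) := by
      apply nlt ht'
      have := (n2 ht hne (w := a)).not.2 (by omega)
      rwa [mul_assoc, e1] at this
    have et : t * (a * cs.simple s) * cs.simple s = t * a := by simp [mul_assoc]
    have la := cs.length_simple_mul a p
    have lta := cs.length_simple_mul (t * a) p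
    have las := cs.length_simple_mul (a * cs.simple s) p
    have ltas := cs.length_simple_mul (t * (a * cs.simple s)) p
    have ra := cs.length_mul_simple a s
    have rta := cs.length_mul_simple (t * a) s
    rw [mul_assoc] at rta
    have IH := ih t' (cs.simple p * a) s ht' (by omega) h'
    rw [mul_assoc (cs.simple p) a, ← e1, ← e1] at IH
    by_cases c1 : cs.length (cs.simple p * (t * a)) < cs.length (t * a)
    · by_cases c2 : cs.length (cs.simple p * a) < cs.length a
      · have c3 := n5a hP h2 c2
        have c4 := factX ht hpt c3 (by omega)
        have := lift_up (p := p) (IH (by omega) (by omega))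
          (by rw [cs.simple_mul_simple_cancel_left]; omega)
        simpa using this
      · by_cases c3 : cs.simple p * (t * a) = t * (a * cs.simple s)
        · rw [← c3, e1]
          exact le_trans' (le_simple (by omega)) (le_of ht' (by omega) h')
        have c4 : cs.length (cs.simple p * (t * (a * cs.simple s))) <
            cs.length (t * (a * cs.simple s)) := by
          by_contra hcon
          have := n5b (s := s) hP hcon (by rw [et]; exact c1)
          rw [et] at this
          apply c3
          rw [← this, cs.simple_mul_simple_cancel_left]
        by_cases c5 : cs.simple p * a = a * cs.simple s
        · have c6 : cs.length a < cs.length (t' * a) := by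
            apply nlt ht'
            intro hcon
            have := n5a ht' h2 hcon
            rw [← c5] at this
            omega
          rw [← c5, e2] at c4 ⊢
          rw [cs.simple_mul_simple_cancel_left] at c4
          exact le_trans' (le_of ht' (by omega) c6) (le_simple c4)
        have c6 : ¬ cs.length (cs.simple p * (a * cs.simple s)) < cs.length (a * cs.simple s) :=
          fun h => c5 (n5b hP c2 h)
        have c7 := IH (by omega) (by omega)
        have c8 := le_simple (cs := cs) (k := k + 1) (p := p)
          (x := cs.simple p * (t * (a * cs.simple s)))
          (by rw [cs.simple_mul_simple_cancel_left]; exact c4)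
        rw [cs.simple_mul_simple_cancel_left] at c8
        exact le_trans' (le_simple (by omega)) (le_trans' (le_mono c7) c8)
    · by_cases c2 : cs.length (cs.simple p * a) < cs.length a
      · exact absurd (factX ht hpt c2 (by omega)) c1
      have c3 : ¬ cs.length (cs.simple p * (t * (a * cs.simple s))) <
            cs.length (t * (a * cs.simple s)) := by
        intro h
        have := n5a (s := s) hP (by rw [et]; exact h3) h
        rw [et] at this
        exact c1 this
      have c5 : ¬ cs.length (cs.simple p * (a * cs.simple s)) < cs.length (a * cs.simple s) :=
        fun h => c3 (factX ht hpt h (by omega))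
      have := lift_down (p := p) (IH (by omega) (by omega))
        (by rw [cs.simple_mul_simple_cancel_left]; omega)
      simpa using this

lemma lemA' {k : ℕ} {a v : W} {s : B} (h : leLk cs k a v)
    (ha : cs.length a < cs.length (a * cs.simple s)) :
    cs.length (v * cs.simple s) < cs.length v → leLk cs k a (v * cs.simple s) := by
  unfold leLk leL at h
  induction h with
  | refl => intro h; omega
  | @tail y v h' h ih =>
    obtain ⟨t, ⟨ht, hk⟩, rfl, hl⟩ := h
    intro hv
    rw [mul_assoc] at hv ⊢
    by_cases hy : cs.length (y * cs.simple s) < cs.length y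
    · refine le_trans' (ih hy) (le_of ht hk (nlt ht fun hcon => ?_))
      have := n5a (a := y * cs.simple s) (s := s) ht (by simpa using hy) hcon
      simp at this
      omega
    · have := cs.length_mul_simple y s
      exact le_trans' h' (lemA k t y s ht hk hl (by omega) hv)

lemma closure_coord {J : Set W} (hJ : J ⊆ Set.range cs.simple) {y : W}
    (hy : y ∈ Subgroup.closure J) {i : B} (hi : cs.simple i ∉ J) :
    ∀ v : B →₀ ℝ, (rho cs y v) i = v i := by
  induction hy using Subgroup.closure_induction with
  | mem x hx =>
    intro v
    obtain ⟨j, rfl⟩ := hJ hx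
    exact sg_coord j i (by rintro rfl; exact hi hx) v
  | one => simp
  | mul x y _ _ h1 h2 => intro v; rw [rho_mul, h1, h2]
  | inv x _ h1 => intro v; rw [← h1, rho_apply_inv]

lemma uniq {J : Set W} (hJ : J ⊆ Set.range cs.simple) {b v : W}
    (hb : ∀ s ∈ J, cs.length b < cs.length (b * s))
    (hv : ∀ s ∈ J, cs.length v < cs.length (v * s))
    (hy : b⁻¹ * v ∈ Subgroup.closure J) : v = b := by
  by_contra hne
  have h1 : b⁻¹ * v ≠ 1 := by
    intro h; exact hne (inv_mul_eq_one.1 h).symm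
  obtain ⟨s, hs⟩ := cs.exists_rightDescent_of_ne_one h1
  have hn := neg_of cs hs
  have hsJ : cs.simple s ∈ J := by
    by_contra hcon
    have h2 := hn s
    rw [closure_coord hJ hy hcon] at h2
    simp [al] at h2
    linarith
  have hp := pos_of_not cs (w := v) (i := s) (by have := hv _ hsJ; omega)
  have hz : ∀ i, cs.simple i ∉ J → (rho cs (b⁻¹ * v) (al s)) i = 0 := by
    intro i hi
    rw [closure_coord hJ hy hi]
    have : s ≠ i := by rintro rfl; exact hi hsJ
    simp [al, this]
  have hvz : rho cs v (al s) = rho cs b (rho cs (b⁻¹ * v) (al s)) := by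
    rw [← rho_mul]; simp
  have hroot : IsRt cs (v * cs.simple s * v⁻¹) (rho cs v (al s)) := ⟨v, s, rfl, rfl⟩
  apply hroot.ne
  refine le_antisymm ?_ hp
  rw [hvz]
  set z := rho cs (b⁻¹ * v) (al s)
  have ez : z = z.sum fun i c => c • al i := by
    conv_lhs => rw [← Finsupp.sum_single z]
    simp [al]
  rw [ez, map_finsuppSum]
  apply Finset.sum_nonpos
  intro i _
  beta_reduce
  rw [map_smul]
  by_cases hi : cs.simple i ∈ J
  · exact smul_nonpos_of_nonpos_of_nonneg (hn i)
      (pos_of_not cs (by have := hb _ hi; omega))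
  · rw [hz i hi, zero_smul]

lemma proj_exists {J : Set W} (hJ : J ⊆ Set.range cs.simple) (n : ℕ) : ∀ u : W, cs.length u = n →
    ∃ a, (∀ s ∈ J, cs.length a < cs.length (a * s)) ∧ a⁻¹ * u ∈ Subgroup.closure J ∧
      ∀ t, cs.IsReflection t → cs.length (t * a) < cs.length a →
        cs.length (t * u) < cs.length u := by
  induction n using Nat.strong_induction_on with
  | _ n ih =>
    intro u hu
    by_cases h : ∀ s ∈ J, cs.length u < cs.length (u * s)
    · exact ⟨u, h, by simp [Subgroup.one_mem], fun _ _ h => h⟩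
    push Not at h
    obtain ⟨s, hs, hl⟩ := h
    obtain ⟨i, rfl⟩ := hJ hs
    have := cs.length_mul_simple u i
    obtain ⟨a, h1, h2, h3⟩ := ih (cs.length (u * cs.simple i)) (by omega) _ rfl
    refine ⟨a, h1, ?_, fun t ht h => ?_⟩
    · have := Subgroup.mul_mem _ h2 (Subgroup.subset_closure hs)
      simpa [mul_assoc] using this
    · have := n5a (s := i) ht (by simp; omega) (h3 t ht h)
      simpa using this

lemma proj_le {J : Set W} (hJ : J ⊆ Set.range cs.simple) {k : ℕ} {a b : W}
    (ha : ∀ s ∈ J, cs.length a < cs.length (a * s))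
    (hb : ∀ s ∈ J, cs.length b < cs.length (b * s)) (n : ℕ) : ∀ v : W, cs.length v = n →
    b⁻¹ * v ∈ Subgroup.closure J → leLk cs k a v → leLk cs k a b := by
  induction n using Nat.strong_induction_on with
  | _ n ih =>
    intro v hv hy hle
    by_cases h : ∀ s ∈ J, cs.length v < cs.length (v * s)
    · rwa [← uniq hJ hb h hy]
    push Not at h
    obtain ⟨s, hs, hl⟩ := h
    obtain ⟨i, rfl⟩ := hJ hs
    have := cs.length_mul_simple v i
    refine ih (cs.length (v * cs.simple i)) (by omega) _ rfl ?_ (lemA' hle (ha _ hs) (by omega))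
    rw [← mul_assoc]
    exact Subgroup.mul_mem _ hy (Subgroup.subset_closure hs)

lemma main {J : Set W} (hJ : J ⊆ Set.range cs.simple) {k : ℕ} {u v a : W} (h : leLk cs k u v)
    (ha : ∀ s ∈ J, cs.length a < cs.length (a * s)) (hau : a⁻¹ * u ∈ Subgroup.closure J) :
    ∀ b, (∀ s ∈ J, cs.length b < cs.length (b * s)) → b⁻¹ * v ∈ Subgroup.closure J →
      leLk cs k a b := by
  unfold leLk leL at h
  induction h with
  | refl =>
    intro b hb hbu
    have : a = b := by
      apply uniq hJ hb ha
      have := Subgroup.mul_mem _ hbu (Subgroup.inv_mem _ hau)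
      simpa [mul_assoc] using this
    rw [this]
    exact Relation.ReflTransGen.refl
  | @tail y v h' h ih =>
    obtain ⟨t, ⟨ht, hk⟩, rfl, hl⟩ := h
    intro b hb hbv
    obtain ⟨c, hc, hcy, hN⟩ := proj_exists hJ _ y rfl
    refine le_trans' (ih c hc hcy) ?_
    have hct : cs.length c < cs.length (t * c) :=
      nlt ht fun hcon => by have := hN t ht hcon; omega
    refine proj_le hJ hc hb _ (t * c) rfl ?_ (le_of ht hk hct)
    have := Subgroup.mul_mem _ hbv (Subgroup.inv_mem _ hcy)
    simpa [mul_assoc] using this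

end KB


/-- for any `J ⊆ S` and `k ∈ ℕ`, the parabolic projection `P^J` is
order preserving on `(W, ≤_{L^k})`. -/
theorem stmt_9 {B W : Type*} [Group W] {M : CoxeterMatrix B} (cs : CoxeterSystem M W)
    {J : Set W} (hJ : J ⊆ Set.range cs.simple) (k : ℕ) :
    ∀ u v uup uJ vup vJ : W,
      PFactor cs.length J u uup uJ → PFactor cs.length J v vup vJ →
      leLk cs k u v → leLk cs k uup vup := by
  rintro u v a x b y ⟨hx, ha, rfl, -⟩ ⟨hy, hb, rfl, -⟩ h
  exact KB.main hJ h ha (by simpa using hx) b hb (by simpa using hy)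
end

section
/- Let (W,S) be a Coxeter system, s ∈ S and t ∈ T with s < t in the Bruhat order. Then s ⊑ t. Consequently, if X ⊆ T is an order ideal of (T, ⊑) and t ∈ X, then s ∈ X (so s ∈ S ∩ X). -/
open KBruhatPaper

namespace KBruhatAux

variable {B W : Type*} [Group W] {M : CoxeterMatrix B} (cs : CoxeterSystem M W)

open Classical in
/-- Action of a simple reflection on `W × ZMod 2`. -/
noncomputable def act (i : B) : Function.End (W × ZMod 2) := fun p =>
  (cs.simple i * p.1 * cs.simple i, p.2 + if p.1 = cs.simple i then 1 else 0)

open Classical in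
theorem act_pow (i j : B) (n : ℕ) (p : W × ZMod 2) :
    ((act cs i * act cs j) ^ n) p =
      ((cs.simple i * cs.simple j) ^ n * p.1 * ((cs.simple i * cs.simple j) ^ n)⁻¹,
        p.2 + ∑ k ∈ Finset.range (2 * n),
          if p.1 = cs.simple j * (cs.simple i * cs.simple j) ^ k then 1 else 0) := by
  induction n with
  | zero =>
    simp only [pow_zero, mul_zero, Finset.range_zero, Finset.sum_empty, add_zero, one_mul, inv_one,
      mul_one]
    rfl
  | succ n ih =>
    rw [pow_succ']
    change act cs i (act cs j (((act cs i * act cs j) ^ n) p)) = _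
    rw [ih]
    have hs : ∀ i, cs.simple i * cs.simple i = 1 := cs.simple_mul_simple_self
    have hi : ∀ i, (cs.simple i)⁻¹ = cs.simple i := cs.inv_simple
    set c := cs.simple i * cs.simple j with hc
    have hcinv : c⁻¹ = cs.simple j * cs.simple i := by rw [hc, mul_inv_rev, hi, hi]
    have hjc : ∀ n : ℕ, (c ^ n)⁻¹ * cs.simple j = cs.simple j * c ^ n := by
      intro n
      induction n with
      | zero => simp
      | succ n ihn =>
        rw [pow_succ c n, mul_inv_rev, mul_assoc, ihn, ← mul_assoc, hcinv, mul_assoc _ _ (cs.simple j),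
          mul_assoc, ← hc, ← pow_succ', pow_succ]
    have e1 : c ^ n * p.1 * (c ^ n)⁻¹ = cs.simple j ↔ p.1 = cs.simple j * c ^ (2 * n) := by
      rw [two_mul, pow_add, ← mul_assoc, ← hjc, mul_inv_eq_iff_eq_mul, ← eq_inv_mul_iff_mul_eq, mul_assoc]
    have e2 : cs.simple j * (c ^ n * p.1 * (c ^ n)⁻¹) * cs.simple j = cs.simple i ↔
        p.1 = cs.simple j * c ^ (2 * n + 1) := by
      have h1 : cs.simple j * c ^ (2 * n + 1) = (c ^ n)⁻¹ * (cs.simple j * cs.simple i * cs.simple j) * c ^ n := by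
        rw [← hcinv, show 2 * n + 1 = (1 + n) + n by ring, pow_add, ← mul_assoc, ← hjc, pow_add, pow_one,
          mul_inv_rev]
        group
      rw [h1]
      constructor
      · intro h
        rw [← h]
        simp [mul_assoc, hs]
      · intro h
        rw [h]
        simp [mul_assoc, hs]
    simp only [act, e1, e2]
    ext
    · simp only [pow_succ' c n, mul_inv_rev, hcinv]
      simp only [hc, mul_assoc]
    · simp only [show 2 * (n + 1) = 2 * n + 1 + 1 by ring, Finset.sum_range_succ]
      ring

theorem act_liftable : M.IsLiftable (act cs) := by
  classical
  intro i j
  funext p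
  rw [act_pow, cs.simple_mul_simple_pow, two_mul, Finset.sum_range_add]
  simp only [pow_add, cs.simple_mul_simple_pow, one_mul, CharTwo.add_self_eq_zero]
  simp only [add_zero, inv_one, mul_one]
  rfl

/-- The parity cocycle. -/
noncomputable def eta (w x : W) : ZMod 2 :=
  (cs.lift ⟨act cs, act_liftable cs⟩ w⁻¹ (x, 0)).2

theorem lift_eq (w : W) : ∀ p : W × ZMod 2, cs.lift ⟨act cs, act_liftable cs⟩ w⁻¹ p =
    (w⁻¹ * p.1 * w, p.2 + eta cs w p.1) := by
  classical
  refine cs.simple_induction_right (p := fun w => ∀ p : W × ZMod 2,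
    cs.lift ⟨act cs, act_liftable cs⟩ w⁻¹ p = (w⁻¹ * p.1 * w, p.2 + eta cs w p.1)) w ?_ ?_
  · intro p
    have : (1 : Function.End (W × ZMod 2)) = id := rfl
    simp [eta, this]
  · intro w i ih p
    have key : ∀ p : W × ZMod 2, cs.lift ⟨act cs, act_liftable cs⟩ (w * cs.simple i)⁻¹ p =
        act cs i (w⁻¹ * p.1 * w, p.2 + eta cs w p.1) := by
      intro p
      rw [mul_inv_rev, map_mul, cs.inv_simple, cs.lift_apply_simple, ← ih]
      rfl
    have key2 : eta cs (w * cs.simple i) p.1 = (act cs i (w⁻¹ * p.1 * w, 0 + eta cs w p.1)).2 := by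
      rw [← key (p.1, 0)]; rfl
    rw [key, key2]
    simp [act, mul_assoc, add_assoc]

theorem eta_mul (v w x : W) : eta cs (v * w) x = eta cs v x + eta cs w (v⁻¹ * x * v) := by
  have h : cs.lift ⟨act cs, act_liftable cs⟩ (v * w)⁻¹ (x, 0) =
      cs.lift ⟨act cs, act_liftable cs⟩ w⁻¹ (cs.lift ⟨act cs, act_liftable cs⟩ v⁻¹ (x, 0)) := by
    rw [mul_inv_rev, map_mul]; rfl
  rw [eta, h, lift_eq, lift_eq]
  simp

open Classical in
theorem eta_simple (i : B) (x : W) :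
    eta cs (cs.simple i) x = if x = cs.simple i then 1 else 0 := by
  rw [eta, cs.inv_simple, cs.lift_apply_simple]
  simp [act]

theorem eta_one (x : W) : eta cs 1 x = 0 := by
  have := eta_mul cs 1 1 x
  simpa using this

/-- Exchange. -/
theorem exchange (ω : List B) (x : W) (h : eta cs (cs.wordProd ω) x ≠ 0) :
    ∃ j < ω.length, x * cs.wordProd ω = cs.wordProd (ω.eraseIdx j) := by
  classical
  induction ω generalizing x with
  | nil => simp [eta_one] at h
  | cons i ω ih =>
    rw [cs.wordProd_cons, eta_mul, eta_simple] at h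
    by_cases hx : x = cs.simple i
    · refine ⟨0, by simp, ?_⟩
      simp [cs.wordProd_cons, hx]
    · rw [if_neg hx, zero_add] at h
      obtain ⟨j, hj, e⟩ := ih _ h
      refine ⟨j + 1, by simpa using hj, ?_⟩
      rw [List.eraseIdx_cons_succ, cs.wordProd_cons, cs.wordProd_cons, ← e]
      simp [mul_assoc]

theorem eta_conj_self {u : W} (hu : cs.IsReflection u) (r : W) (hc : u * r = r * u) :
    eta cs u r = (by classical exact if r = u then 1 else 0) := by
  classical
  obtain ⟨x, i, rfl⟩ := hu
  rw [eta_mul, eta_mul, eta_simple]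
  have h0 : eta cs (x * x⁻¹) r = 0 := by rw [mul_inv_cancel, eta_one]
  rw [eta_mul] at h0
  have h1 : (x * cs.simple i)⁻¹ * r * (x * cs.simple i) = x⁻¹ * r * x := by
    have := congrArg (fun z => (x * cs.simple i)⁻¹ * z * x) hc
    simp only [mul_assoc, inv_mul_cancel, mul_one, inv_mul_cancel_left, mul_inv_rev] at this ⊢
    simpa using this.symm
  have h2 : x⁻¹ * r * x = cs.simple i ↔ r = x * cs.simple i * x⁻¹ := by
    constructor
    · intro h; rw [← h]; group
    · intro h; rw [h]; group
  rw [h1]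
  simp only [h2]
  linear_combination h0

theorem lt_of_eta {w x : W} (h : eta cs w x ≠ 0) : cs.length (x * w) < cs.length w := by
  obtain ⟨ω, hω, rfl⟩ := cs.exists_isReduced w
  obtain ⟨j, hj, e⟩ := exchange cs ω x h
  rw [e, hω.eq]
  calc _ ≤ (ω.eraseIdx j).length := cs.length_wordProd_le _
    _ < ω.length := by rw [← List.length_eraseIdx_add_one hj]; exact lt_add_one _

theorem eta_iff {w x : W} (hx : cs.IsReflection x) :
    eta cs w x ≠ 0 ↔ cs.length (x * w) < cs.length w := by
  refine ⟨lt_of_eta cs, fun h h0 => ?_⟩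
  have h1 : eta cs (x * w) x ≠ 0 := by
    rw [eta_mul, eta_conj_self cs hx x rfl]
    simp [h0]
  have := lt_of_eta cs h1
  rw [← mul_assoc, hx.mul_self, one_mul] at this
  omega

/-- Conjugation shortens. -/
theorem conj_lt {u : W} (hu : cs.IsReflection u) (j : B) (hne : cs.simple j ≠ u)
    (h : cs.length (cs.simple j * u) < cs.length u) :
    cs.length (cs.simple j * u * cs.simple j) < cs.length (cs.simple j * u) := by
  classical
  have hr := cs.isReflection_simple j
  have h1 := (eta_iff cs hr).2 h
  have hcomm : ¬ (u * cs.simple j = cs.simple j * u) := fun hc => by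
    rw [eta_conj_self cs hu _ hc] at h1
    simp [hne] at h1
  have h2 : eta cs (u * cs.simple j) (cs.simple j) ≠ 0 := by
    rw [eta_mul, hu.inv, eta_simple, if_neg, add_zero]
    · exact h1
    · intro h3
      apply hcomm
      calc u * cs.simple j = u * cs.simple j * (u * u) := by rw [hu.mul_self, mul_one]
        _ = u * cs.simple j * u * u := by simp only [mul_assoc]
        _ = _ := by rw [h3]
  have := lt_of_eta cs h2
  rw [← cs.length_inv, ← cs.length_inv (u * _)] at this
  simpa [hu.inv, hr.inv, mul_assoc] using this

section Dihedral

variable {r q : W}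

theorem conj_zpow' (hr : r * r = 1) (hq : q * q = 1) (k : ℤ) :
    r * (r * q) ^ k * r = (r * q) ^ (-k) := by
  have hri : r⁻¹ = r := inv_eq_of_mul_eq_one_left hr
  have hqi : q⁻¹ = q := inv_eq_of_mul_eq_one_left hq
  have h := conj_zpow (i := k) (a := r) (b := r * q)
  have h2 : r * (r * q) * r⁻¹ = (r * q)⁻¹ := by
    rw [mul_inv_rev, hri, hqi, ← mul_assoc, hr, one_mul]
  rw [h2, inv_zpow, ← zpow_neg, hri] at h
  exact h.symm

theorem zpow_r (hr : r * r = 1) (hq : q * q = 1) (k : ℤ) :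
    (r * q) ^ k * r = r * (r * q) ^ (-k) := by
  rw [← conj_zpow' hr hq, ← mul_assoc, ← mul_assoc, hr, one_mul]

theorem mem_dihedral (hr : r * r = 1) (hq : q * q = 1) {x : W}
    (hx : x ∈ Subgroup.closure ({r, q} : Set W)) :
    ∃ k : ℤ, x = (r * q) ^ k ∨ x = r * (r * q) ^ k := by
  have hri : r⁻¹ = r := inv_eq_of_mul_eq_one_left hr
  induction hx using Subgroup.closure_induction with
  | mem x hx =>
    rcases hx with rfl | hx
    · exact ⟨0, Or.inr (by simp)⟩
    · rw [Set.mem_singleton_iff] at hx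
      subst hx
      exact ⟨1, Or.inr (by rw [zpow_one, ← mul_assoc, hr, one_mul])⟩
  | one => exact ⟨0, Or.inl (by simp)⟩
  | mul x y _ _ hx hy =>
    obtain ⟨k, rfl | rfl⟩ := hx <;> obtain ⟨l, rfl | rfl⟩ := hy
    · exact ⟨k + l, Or.inl (by rw [zpow_add])⟩
    · exact ⟨-k + l, Or.inr (by rw [← mul_assoc, zpow_r hr hq, zpow_add, mul_assoc])⟩
    · exact ⟨k + l, Or.inr (by rw [zpow_add, mul_assoc])⟩
    · exact ⟨-k + l, Or.inl (by rw [← mul_assoc, conj_zpow' hr hq, zpow_add])⟩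
  | inv x _ hx =>
    obtain ⟨k, rfl | rfl⟩ := hx
    · exact ⟨-k, Or.inl (by rw [zpow_neg])⟩
    · exact ⟨k, Or.inr (by rw [mul_inv_rev, ← zpow_neg, hri, zpow_r hr hq, neg_neg])⟩

theorem zpow_mem_dihedral (k : ℤ) : (r * q) ^ k ∈ Subgroup.closure ({r, q} : Set W) :=
  Subgroup.zpow_mem _ (Subgroup.mul_mem _ (Subgroup.subset_closure (by simp))
    (Subgroup.subset_closure (by simp))) k

theorem r_zpow_mem_dihedral (k : ℤ) : r * (r * q) ^ k ∈ Subgroup.closure ({r, q} : Set W) :=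
  Subgroup.mul_mem _ (Subgroup.subset_closure (by simp)) (zpow_mem_dihedral k)

variable {cs}

theorem refl_r_zpow (hr : cs.IsReflection r) (hq : cs.IsReflection q) (k : ℤ) :
    cs.IsReflection (r * (r * q) ^ k) := by
  obtain ⟨l, rfl | rfl⟩ := Int.even_or_odd' k
  · have h := hr.conj ((r * q) ^ (-l))
    rw [zpow_r hr.mul_self hq.mul_self, neg_neg, ← zpow_neg, neg_neg, mul_assoc, ← zpow_add,
      ← two_mul] at h
    exact h
  · have h := hq.conj ((r * q) ^ (-l))
    have e : q = r * (r * q) := by rw [← mul_assoc, hr.mul_self, one_mul]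
    have e2 : (r * q) ^ (-l) * q * ((r * q) ^ (-l))⁻¹ = r * (r * q) ^ (2 * l + 1) := by
      calc (r * q) ^ (-l) * q * ((r * q) ^ (-l))⁻¹
          = (r * q) ^ (-l) * (r * (r * q)) * ((r * q) ^ (-l))⁻¹ := by rw [← e]
        _ = ((r * q) ^ (-l) * r) * ((r * q) * (r * q) ^ l) := by
            rw [← zpow_neg, neg_neg]; simp only [mul_assoc]
        _ = _ := by
            rw [zpow_r hr.mul_self hq.mul_self, neg_neg, mul_assoc, ← zpow_one_add, ← zpow_add]
            congr 2; ring
    rw [e2] at h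
    exact h

theorem odd_of_refl (hr : cs.IsReflection r) (hq : cs.IsReflection q) {x : W}
    (hxr : cs.IsReflection x) (hx : x ∈ Subgroup.closure ({r, q} : Set W)) :
    ∃ k : ℤ, x = r * (r * q) ^ k := by
  obtain ⟨k, h | h⟩ := mem_dihedral hr.mul_self hq.mul_self hx
  · exfalso
    have h1 := (hr.length_mul_right_ne x)
    have h2 := (refl_r_zpow hr hq k).odd_length
    have h3 := hxr.odd_length
    have h4 := hr.odd_length
    rw [← h] at h2
    have h5 := cs.length_mul_mod_two r x
    rw [Nat.odd_iff] at *
    omega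
  · exact ⟨k, h⟩

/-- The order-two element of a cyclic group is unique. -/
theorem zpow_unique_invol {a : W} {i j : ℤ} (hi : a ^ i ≠ 1) (hj : a ^ j ≠ 1)
    (hi2 : a ^ (2 * i) = 1) (hj2 : a ^ (2 * j) = 1) : a ^ i = a ^ j := by
  rw [← mul_inv_eq_one, ← zpow_neg, ← zpow_add, ← orderOf_dvd_iff_zpow_eq_one]
  rw [ne_eq, ← orderOf_dvd_iff_zpow_eq_one] at hi hj
  rw [← orderOf_dvd_iff_zpow_eq_one] at hi2 hj2
  generalize (orderOf a : ℤ) = n at *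
  obtain ⟨p, hp⟩ := hi2
  obtain ⟨s, hs⟩ := hj2
  obtain ⟨p', rfl | rfl⟩ := Int.even_or_odd' p
  · exact absurd ⟨p', by linarith⟩ hi
  obtain ⟨s', rfl | rfl⟩ := Int.even_or_odd' s
  · exact absurd ⟨s', by linarith⟩ hj
  exact ⟨p' - s', by linarith⟩

variable (cs)

/-- Canonical generator condition in terms of `eta`. -/
def Can (W' : Subgroup W) (u : W) : Prop :=
  cs.IsReflection u ∧ u ∈ W' ∧ ∀ x ∈ W', cs.IsReflection x → (eta cs u x ≠ 0 ↔ x = u)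

variable {cs}

theorem can_of_mem {W' : Subgroup W} {u : W} (h : u ∈ CanGens cs.length (TSet cs) W') :
    Can cs W' u := by
  obtain ⟨h1, h2⟩ := h
  have h3 : ∀ x, x ∈ NSet cs.length (TSet cs) u ∩ (W' : Set W) ↔ x = u := by
    intro x; rw [h2]; rfl
  refine ⟨h1, ((h3 u).2 rfl).2, fun x hx hxr => ?_⟩
  rw [eta_iff cs hxr, ← h3 x]
  exact ⟨fun h => ⟨⟨hxr, h⟩, hx⟩, fun h => h.1.2⟩

open Classical in
theorem Can.eta_eq {W' : Subgroup W} {u x : W} (h : Can cs W' u) (hx : x ∈ W')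
    (hxr : cs.IsReflection x) : eta cs u x = if x = u then 1 else 0 := by
  have h1 := h.2.2 x hx hxr
  split_ifs with h2
  · have h3 := h1.2 h2
    revert h3
    generalize eta cs u x = z
    revert z; decide
  · by_contra h3; exact h2 (h1.1 h3)

theorem conj_refl {u x : W} (hu : cs.IsReflection u) (hx : cs.IsReflection x) :
    cs.IsReflection (u * x * u) := by
  have := hx.conj u
  rwa [hu.inv] at this

open Classical in
theorem Can.eta_triple {W' : Subgroup W} {u v w x : W} (hu : Can cs W' u) (hv : Can cs W' v)
    (hw : Can cs W' w) (hx : x ∈ W') (hxr : cs.IsReflection x) :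
    eta cs (u * v * w) x = (if x = u then 1 else 0) + (if u * x * u = v then 1 else 0)
      + (if v * (u * x * u) * v = w then 1 else 0) := by
  have hm1 : u * x * u ∈ W' := W'.mul_mem (W'.mul_mem hu.2.1 hx) hu.2.1
  have hm2 : v * (u * x * u) * v ∈ W' := W'.mul_mem (W'.mul_mem hv.2.1 hm1) hv.2.1
  have hr1 := conj_refl hu.1 hxr
  have hr2 := conj_refl hv.1 hr1
  have e : (u * v)⁻¹ * x * (u * v) = v * (u * x * u) * v := by
    rw [mul_inv_rev, hu.1.inv, hv.1.inv]; simp only [mul_assoc]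
  rw [eta_mul, eta_mul, e, hu.1.inv, hu.eta_eq hx hxr, hv.eta_eq hm1 hr1, hw.eta_eq hm2 hr2]

theorem conj_cancel {p q x : W} (hp : p * p = 1) (h : p * q * p = x) : q = p * x * p := by
  rw [← h]
  simp only [mul_assoc, hp, mul_one]
  rw [← mul_assoc, hp, one_mul]

theorem Can.no_conj {W' : Subgroup W} {p q u : W} (hp : Can cs W' p) (hq : Can cs W' q)
    (hu : Can cs W' u) (hpq : p ≠ q) (hpu : p ≠ u) (hqu : q ≠ u) : p * q * p ≠ u := by
  classical
  intro h
  have h1 := Can.eta_triple hp hq hp hp.2.1 hp.1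
  rw [h, hu.eta_eq hp.2.1 hp.1, hp.1.mul_self, one_mul, if_neg hpu, if_neg hpq, if_pos rfl] at h1
  split_ifs at h1 with h2
  · apply hqu
    have h3 : p * q = q * p := by
      calc p * q = (q * p * q) * q := by rw [h2]
        _ = q * p := by rw [mul_assoc, hq.1.mul_self, mul_one]
    rw [← h, h3, mul_assoc, hp.1.mul_self, mul_one]
  · revert h1; decide

/-- Three distinct canonical generators: a commutation consequence. -/
theorem Can.comm_of_three {W' : Subgroup W} {r u v : W} (hr : Can cs W' r) (hu : Can cs W' u)
    (hv : Can cs W' v) (hru : r ≠ u) (hrv : r ≠ v) (huv : u ≠ v)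
    (hrot : u * r * v = v * r * u) : r * v = v * r := by
  classical
  have h1 := Can.eta_triple hu hr hv hu.2.1 hu.1
  have h2 := Can.eta_triple hv hr hu hu.2.1 hu.1
  rw [hrot, h2] at h1
  rw [hu.1.mul_self, one_mul, if_neg huv, if_pos rfl, if_neg hru.symm,
    if_neg (Can.no_conj hr hu hv hru hrv huv),
    if_neg (Can.no_conj hv hu hr huv.symm hrv.symm hru.symm)] at h1
  split_ifs at h1 with h3
  · have h4 : r * (v * u * v) = u * r := by
      calc r * (v * u * v) = r * (v * u * v) * r * r := by
            rw [mul_assoc _ r r, hr.1.mul_self, mul_one]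
        _ = u * r := by rw [h3]
    have h5 : r * v * u = v * r * u := by
      calc r * v * u = r * (v * u * v) * v := by
            simp only [mul_assoc, hv.1.mul_self, mul_one]
        _ = u * r * v := by rw [h4]
        _ = v * r * u := hrot
    exact mul_right_cancel h5
  · exact absurd h1 (by decide)

theorem unique_can (hr : cs.IsReflection r) (hq : cs.IsReflection q) {u v : W}
    (hcr : Can cs (Subgroup.closure ({r, q} : Set W)) r)
    (hu : Can cs (Subgroup.closure ({r, q} : Set W)) u)
    (hv : Can cs (Subgroup.closure ({r, q} : Set W)) v)
    (hru : r ≠ u) (hrv : r ≠ v) : u = v := by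
  by_contra huv
  obtain ⟨k, hk⟩ := odd_of_refl hr hq hu.1 hu.2.1
  obtain ⟨l, hl⟩ := odd_of_refl hr hq hv.1 hv.2.1
  have hku : r * u = (r * q) ^ k := by rw [hk, ← mul_assoc, hr.mul_self, one_mul]
  have hlv : r * v = (r * q) ^ l := by rw [hl, ← mul_assoc, hr.mul_self, one_mul]
  have hrot : u * r * v = v * r * u := by
    have : (r * u) * (r * v) = (r * v) * (r * u) := by
      rw [hku, hlv, ← zpow_add, ← zpow_add, add_comm]
    simp only [mul_assoc] at this ⊢
    exact mul_left_cancel this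
  have c1 := Can.comm_of_three hcr hu hv hru hrv huv hrot
  have c2 := Can.comm_of_three hcr hv hu hrv hru (Ne.symm huv) hrot.symm
  have e : ∀ {x : W} {k : ℤ}, x * x = 1 → r * x = (r * q) ^ k → r * x = x * r →
      (r * q) ^ (2 * k) = 1 := by
    intro x k hx h hc
    rw [two_mul, zpow_add, ← h]
    nth_rewrite 1 [hc]
    rw [mul_assoc, ← mul_assoc r, hr.mul_self, one_mul, hx]
  have n : ∀ {x : W} {k : ℤ}, r * x = (r * q) ^ k → r ≠ x → (r * q) ^ k ≠ 1 := by
    intro x k h hne h1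
    rw [h1] at h
    apply hne
    calc r = r * (r * x) := by rw [h, mul_one]
      _ = x := by rw [← mul_assoc, hr.mul_self, one_mul]
  have := zpow_unique_invol (n hku hru) (n hlv hrv) (e hu.1.mul_self hku c2)
    (e hv.1.mul_self hlv c1)
  rw [← hku, ← hlv] at this
  exact huv (mul_left_cancel this)

end Dihedral

theorem simple_mem_canGens (j : B) {W' : Subgroup W} (h : cs.simple j ∈ W') :
    cs.simple j ∈ CanGens cs.length (TSet cs) W' := by
  refine ⟨cs.isReflection_simple j, ?_⟩
  ext x
  rw [Set.mem_singleton_iff]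
  constructor
  · rintro ⟨⟨_, h2⟩, _⟩
    rw [cs.length_simple, Nat.lt_one_iff, cs.length_eq_zero_iff] at h2
    rw [← mul_left_inj (cs.simple j), h2, cs.simple_mul_simple_self]
  · rintro rfl
    refine ⟨⟨cs.isReflection_simple j, ?_⟩, h⟩
    simp

theorem exists_can (j : B) {q : W} (hq : cs.IsReflection q) (hne : cs.simple j ≠ q) :
    ∃ u, u ≠ cs.simple j ∧
      u ∈ CanGens cs.length (TSet cs) (Subgroup.closure ({cs.simple j, q} : Set W)) := by
  have hr := cs.isReflection_simple j
  set r := cs.simple j with hrdef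
  have hne1 : r * q ≠ 1 := fun h => hne (by
    calc r = r * (q * q) := by rw [hq.mul_self, mul_one]
      _ = q := by rw [← mul_assoc, h, one_mul])
  -- minimal nontrivial rotation
  obtain ⟨k, hk, hmin⟩ : ∃ k : ℤ, (r * q) ^ k ≠ 1 ∧
      ∀ l : ℤ, (r * q) ^ l ≠ 1 → cs.length ((r * q) ^ k) ≤ cs.length ((r * q) ^ l) := by
    classical
    have hex : ∃ m : ℕ, ∃ k : ℤ, (r * q) ^ k ≠ 1 ∧ cs.length ((r * q) ^ k) = m :=
      ⟨_, 1, by rwa [zpow_one], rfl⟩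
    obtain ⟨k, hk, hm⟩ := Nat.find_spec hex
    exact ⟨k, hk, fun l hl => hm ▸ Nat.find_min' hex ⟨l, hl, rfl⟩⟩
  -- a short reflection
  obtain ⟨l, hl1, hl⟩ : ∃ l : ℤ, (r * q) ^ l ≠ 1 ∧
      cs.length (r * (r * q) ^ l) < cs.length ((r * q) ^ k) := by
    by_cases h : cs.length (r * (r * q) ^ k) < cs.length ((r * q) ^ k)
    · exact ⟨k, hk, h⟩
    · refine ⟨-k, by rwa [zpow_neg, ne_eq, inv_eq_one], ?_⟩
      have hlen := hr.length_mul_right_ne ((r * q) ^ k)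
      have e : r * (r * (r * q) ^ k) = (r * q) ^ k := by rw [← mul_assoc, hr.mul_self, one_mul]
      have h2 := conj_lt cs (refl_r_zpow hr hq k) j (by
        intro h
        exact hk (by rw [← e, ← h]; exact hr.mul_self)) (by
        rw [← hrdef, e]; omega)
      rw [← hrdef, e, zpow_r hr.mul_self hq.mul_self] at h2
      exact h2
  refine ⟨r * (r * q) ^ l, ?_, refl_r_zpow hr hq l, ?_⟩
  · intro h
    exact hl1 (mul_eq_left.1 h)
  ext x
  rw [Set.mem_singleton_iff]
  have hul := refl_r_zpow hr hq l
  constructor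
  · rintro ⟨⟨hx, h2⟩, hxm⟩
    obtain ⟨n, rfl⟩ := odd_of_refl hr hq hx hxm
    by_contra hcon
    have e : r * (r * q) ^ n * (r * (r * q) ^ l) = (r * q) ^ (-n + l) := by
      rw [← mul_assoc, conj_zpow' hr.mul_self hq.mul_self, zpow_add]
    rw [e] at h2
    have h3 := hmin (-n + l) (by
      intro h
      rw [neg_add_eq_sub, zpow_sub, mul_inv_eq_one] at h
      exact hcon (by rw [h]))
    omega
  · rintro rfl
    refine ⟨⟨hul, ?_⟩, r_zpow_mem_dihedral l⟩
    rw [hul.mul_self, cs.length_one]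
    exact hul.odd_length.pos

theorem encard_canGens (j : B) {q : W} (hq : cs.IsReflection q) (hne : cs.simple j ≠ q) :
    (CanGens cs.length (TSet cs) (Subgroup.closure ({cs.simple j, q} : Set W))).encard = 2 := by
  obtain ⟨u, hu, hum⟩ := exists_can cs j hq hne
  have hr := simple_mem_canGens cs j
    (W' := Subgroup.closure ({cs.simple j, q} : Set W)) (Subgroup.subset_closure (by simp))
  have : CanGens cs.length (TSet cs) (Subgroup.closure ({cs.simple j, q} : Set W)) =
      {cs.simple j, u} := by
    ext v
    constructor
    · intro hv
      by_cases h : v = cs.simple j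
      · exact Or.inl h
      · exact Or.inr (unique_can (cs.isReflection_simple j) hq (can_of_mem hr) (can_of_mem hv)
          (can_of_mem hum) (Ne.symm h) (Ne.symm hu))
    · rintro (rfl | rfl)
      · exact hr
      · exact hum
  rw [this, Set.encard_pair (Ne.symm hu)]

theorem ltL_of_step {x u v : W} (hx : cs.IsReflection x) (h : v = x * u)
    (hl : cs.length u < cs.length v) :
    u * v⁻¹ ∈ TSet cs ∧ ltL cs.length (TSet cs) u v := by
  refine ⟨?_, Relation.ReflTransGen.single ⟨x, hx, h, hl⟩, ?_⟩
  · rw [h, mul_inv_rev, mul_inv_cancel_left]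
    exact hx.isReflection_inv
  · rintro rfl; exact lt_irrefl _ hl

/-- The two dihedral relations. -/
theorem sqLe'_path (j : B) {q p x : W} (hq : cs.IsReflection q) (hne : cs.simple j ≠ q)
    (hp : p ∈ Subgroup.closure ({cs.simple j, q} : Set W)) (hx : cs.IsReflection x)
    (hxp : cs.simple j * q = x * p) (h1 : cs.length p < cs.length (cs.simple j * q))
    (h2 : cs.length (cs.simple j * q) < cs.length (cs.simple j * q * cs.simple j)) :
    SqLe' cs.length (TSet cs) p (cs.simple j * q * cs.simple j) := by
  have hr := cs.isReflection_simple j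
  have hrm : cs.simple j ∈ Subgroup.closure ({cs.simple j, q} : Set W) :=
    Subgroup.subset_closure (by simp)
  have hqm : q ∈ Subgroup.closure ({cs.simple j, q} : Set W) :=
    Subgroup.subset_closure (by simp)
  refine Or.inr ⟨Subgroup.closure ({cs.simple j, q} : Set W), ⟨_, ?_, rfl⟩, hp,
    Subgroup.mul_mem _ (Subgroup.mul_mem _ hrm hqm) hrm, encard_canGens cs j hq hne, 2,
    fun k => if k = 0 then p else if k = 1 then cs.simple j * q else
      cs.simple j * q * cs.simple j, by simp, by simp, ?_, ?_⟩
  · rintro y (rfl | rfl)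
    · exact hr
    · exact hq
  · intro i _
    dsimp only
    split_ifs
    · exact hp
    · exact Subgroup.mul_mem _ hrm hqm
    · exact Subgroup.mul_mem _ (Subgroup.mul_mem _ hrm hqm) hrm
  · intro i hi
    have : i = 0 ∨ i = 1 := by omega
    rcases this with rfl | rfl
    · simpa using ltL_of_step cs hx hxp h1
    · have h3 := hr.conj (cs.simple j * q)
      simpa using ltL_of_step cs (v := cs.simple j * q * cs.simple j) h3 (by rw [inv_mul_cancel_right]) h2

/-- Elements expressible without the simple reflection `cs.simple i`. -/
def Avoid (i : B) (w : W) : Prop :=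
  ∃ ω : List B, (∀ j ∈ ω, cs.simple j ≠ cs.simple i) ∧ w = cs.wordProd ω

theorem avoid_down {i : B} {u v : W} (h : Step cs.length (TSet cs) u v) (hv : Avoid cs i v) :
    Avoid cs i u := by
  obtain ⟨x, hx, rfl, hl⟩ := h
  obtain ⟨ω, hω, e⟩ := hv
  have hx' : cs.IsReflection x := hx
  have h1 : eta cs (x * u) x ≠ 0 := by
    rw [eta_iff cs hx', ← mul_assoc, hx'.mul_self, one_mul]; exact hl
  rw [e] at h1
  obtain ⟨k, _, h2⟩ := exchange cs ω x h1
  refine ⟨ω.eraseIdx k, fun j hj => hω j (List.mem_of_mem_eraseIdx hj), ?_⟩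
  rw [← h2, ← e, ← mul_assoc, hx'.mul_self, one_mul]

theorem exists_descent_of_word (n : ℕ) : ∀ ω : List B, ω.length ≤ n → cs.wordProd ω ≠ 1 →
    ∃ j ∈ ω, cs.length (cs.simple j * cs.wordProd ω) < cs.length (cs.wordProd ω) := by
  induction n with
  | zero =>
    intro ω h hne
    rw [Nat.le_zero, List.length_eq_zero_iff] at h
    simp [h] at hne
  | succ n ih =>
    intro ω h hne
    cases ω with
    | nil => simp at hne
    | cons j ω =>
      by_cases hl : cs.length (cs.simple j * cs.wordProd (j :: ω)) < cs.length (cs.wordProd (j :: ω))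
      · exact ⟨j, by simp, hl⟩
      · have hlen := (cs.isReflection_simple j).length_mul_right_ne (cs.wordProd (j :: ω))
        rw [cs.wordProd_cons, ← mul_assoc, cs.simple_mul_simple_self, one_mul] at hl hlen
        have h1 : eta cs (cs.wordProd ω) (cs.simple j) ≠ 0 := by
          rw [eta_iff cs (cs.isReflection_simple j)]; omega
        obtain ⟨k, hk, h2⟩ := exchange cs ω _ h1
        rw [cs.wordProd_cons, h2] at hne ⊢
        have h3 := List.length_eraseIdx_add_one hk
        simp only [List.length_cons] at h
        obtain ⟨a, ha, hb⟩ := ih (ω.eraseIdx k) (by omega) hne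
        exact ⟨a, List.mem_cons_of_mem _ (List.mem_of_mem_eraseIdx ha), hb⟩

theorem not_avoid_self (i : B) : ¬ Avoid cs i (cs.simple i) := by
  rintro ⟨ω, hω, e⟩
  have hne : cs.wordProd ω ≠ 1 := by
    rw [← e, ne_eq, ← cs.length_eq_zero_iff, cs.length_simple]; simp
  obtain ⟨j, hj, hl⟩ := exists_descent_of_word cs _ ω le_rfl hne
  rw [← e, cs.length_simple, Nat.lt_one_iff, cs.length_eq_zero_iff] at hl
  apply hω j hj
  rw [← mul_left_inj (cs.simple i), hl, cs.simple_mul_simple_self]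

theorem not_avoid_of_le {i : B} {t : W} (h : leL cs.length (TSet cs) (cs.simple i) t) :
    ¬ Avoid cs i t := by
  unfold leL at h
  induction h with
  | refl => exact not_avoid_self cs i
  | tail _ hs ih => exact fun ha => ih (avoid_down cs hs ha)

theorem main_aux (i : B) (n : ℕ) : ∀ t : W, cs.length t ≤ n → cs.IsReflection t →
    ¬ Avoid cs i t → SqLe cs.length (TSet cs) (cs.simple i) t := by
  induction n with
  | zero =>
    intro t h ht _
    have := ht.odd_length.pos
    omega
  | succ n ih =>
    intro t h ht hav
    have ht1 : t ≠ 1 := by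
      rintro rfl
      have := ht.odd_length.pos
      simp at this
    obtain ⟨j, hj⟩ := cs.exists_leftDescent_of_ne_one ht1
    have hr := cs.isReflection_simple j
    by_cases htj : cs.simple j = t
    · by_cases hji : cs.simple j = cs.simple i
      · rw [← htj, hji]
        exact Relation.TransGen.single (Or.inl rfl)
      · exact absurd ⟨[j], by simpa using hji, by simp [htj]⟩ hav
    · have hj' : cs.length (cs.simple j * t) < cs.length t := hj
      have hlt := conj_lt cs ht j htj hj'
      obtain ⟨q, hqdef⟩ : ∃ q, q = cs.simple j * t * cs.simple j := ⟨_, rfl⟩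
      have hq : cs.IsReflection q := by rw [hqdef]; exact conj_refl hr ht
      have htq : t = cs.simple j * q * cs.simple j := conj_cancel hr.mul_self hqdef.symm
      have hjq : cs.simple j * q = t * cs.simple j := by
        rw [hqdef, ← mul_assoc, ← mul_assoc, hr.mul_self, one_mul]
      have hlen : cs.length (cs.simple j * q) = cs.length (cs.simple j * t) := by
        rw [hjq, ← cs.length_inv, mul_inv_rev, hr.inv, ht.inv]
      rw [← hqdef] at hlt
      have hqpos := hq.odd_length.pos
      have hne : cs.simple j ≠ q := by
        intro h
        rw [← h, hr.mul_self, one_mul] at htq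
        exact htj htq.symm
      have h2 : cs.length (cs.simple j * q) <
          cs.length (cs.simple j * q * cs.simple j) := by
        rw [← htq]; omega
      by_cases hji : cs.simple j = cs.simple i
      · refine Relation.TransGen.single ?_
        rw [← hji]
        have := sqLe'_path cs j hq hne (p := cs.simple j) (x := t)
          (Subgroup.subset_closure (by simp)) ht hjq (by rw [cs.length_simple]; omega) h2
        rwa [← htq] at this
      · have hstep := sqLe'_path cs j hq hne (p := q) (x := cs.simple j)
          (Subgroup.subset_closure (by simp)) hr rfl (by omega) h2
        rw [← htq] at hstep
        refine Relation.TransGen.tail (ih q (by omega) hq ?_) hstep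
        rintro ⟨ω, hω, e⟩
        apply hav
        refine ⟨j :: (ω ++ [j]), ?_, ?_⟩
        · intro k hk
          simp only [List.mem_cons, List.mem_append, List.not_mem_nil, or_false] at hk
          rcases hk with rfl | hk | rfl
          · exact hji
          · exact hω k hk
          · exact hji
        · rw [htq, e, cs.wordProd_cons, cs.wordProd_append, cs.wordProd_singleton, mul_assoc]

end KBruhatAux

/-- if `s ∈ S`, `t ∈ T` and `s < t` in the Bruhat order, then
`s ⊑ t`; hence any order ideal `X` of `(T, ⊑)` containing `t` contains `s`. -/
theorem stmt_11 {B W : Type*} [Group W] {M : CoxeterMatrix B} (cs : CoxeterSystem M W)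
    (i : B) {t : W} (ht : cs.IsReflection t)
    (hlt : bruhatLT cs (cs.simple i) t) :
    SqLe cs.length (TSet cs) (cs.simple i) t ∧
    ∀ X : Set W, IsIdeal cs.length (TSet cs) X → t ∈ X → cs.simple i ∈ X := by
  have h := KBruhatAux.main_aux cs i _ t le_rfl ht (KBruhatAux.not_avoid_of_le cs hlt.1)
  exact ⟨h, fun X hX htX => hX.2 _ _ h htX⟩
end
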